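/- arXiv:1812.01446 — 7 statements merged into one kernel-verified Lean document; each statement's English description precedes it below -/
import Mathlib

section
/- Let c_1,…,c_r be pairwise distinct real numbers and (n_1,…,n_r) ∈ ℕ^r. Then there exists a unique monic real polynomial P of degree |n̄| = n_1+⋯+n_r such that ∫_ℝ x^k P(x) e^{−x²+c_j x} dx = 0 for all 1 ≤ j ≤ r and 0 ≤ k ≤ n_j−1, and this polynomial P has |n̄| distinct real zeros (all its zeros are real and simple). -/
open MeasureTheory Polynomial Real

/-!
Write `w_c(x) = exp (-x² + c x)`. The operator `R_c p = -(1/2) w_c⁻¹ (p w_c)'` maps polynomials to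
polynomials, preserves leading coefficients and raises degrees by one. Integration by parts shows
that `R_{c_j}` adds one orthogonality condition with respect to `w_{c_j}` and keeps all the others,
while Rolle's theorem, applied to `p w_c`, which vanishes at `±∞`, shows that `R_c p` has at least
one real zero more than `p`. Starting from `1`, this produces an orthogonal polynomial with simple
real zeros.

Conversely, a polynomial with `∫ P w_c = 0` lies in the range of `R_c`, so an orthogonal polynomial
can be lowered along any index with `n_j > 0`. Hence a nonzero orthogonal polynomial has degree at
least `∑ n_j`, which applied to the difference of two monic solutions gives uniqueness.
-/

section Rolle

open Filter Set Topology

theorem card_level_le_card_deriv_zeros_add_one {a b l : ℝ} {f f' : ℝ → ℝ} {s t : Finset ℝ}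
    (hf : ∀ x ∈ Ioo a b, HasDerivAt f (f' x) x) (hs : ∀ x ∈ s, x ∈ Icc a b)
    (hright : ∀ x ∈ s, x < b → Tendsto f (𝓝[>] x) (𝓝 l))
    (hleft : ∀ x ∈ s, a < x → Tendsto f (𝓝[<] x) (𝓝 l))
    (ht : ∀ x ∈ Ioo a b, f' x = 0 → x ∈ t) : s.card ≤ t.card + 1 := by
  refine Finset.card_le_of_interleaved fun x hx y hy hxy _ => ?_
  have hsub : Ioo x y ⊆ Ioo a b := Ioo_subset_Ioo (hs x hx).1 (hs y hy).2
  obtain ⟨z, hz, hz0⟩ := exists_hasDerivAt_eq_zero' hxy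
    (hright x hx (hxy.trans_le (hs y hy).2)) (hleft y hy ((hs x hx).1.trans_lt hxy))
    fun z hz => hf z (hsub hz)
  exact ⟨z, ht z (hsub hz) hz0, hz⟩

theorem card_level_add_one_le_card_deriv_zeros_Ioo {a b l : ℝ} (hab : a < b) {f f' : ℝ → ℝ}
    {s t : Finset ℝ} (hf : ∀ x ∈ Ioo a b, HasDerivAt f (f' x) x)
    (ha : Tendsto f (𝓝[>] a) (𝓝 l)) (hb : Tendsto f (𝓝[<] b) (𝓝 l))
    (hs : ∀ x ∈ s, x ∈ Ioo a b ∧ f x = l) (ht : ∀ x ∈ Ioo a b, f' x = 0 → x ∈ t) :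
    s.card + 1 ≤ t.card := by
  have hlim : ∀ x ∈ s, Tendsto f (𝓝 x) (𝓝 l) := fun x hx =>
    (hs x hx).2 ▸ (hf x (hs x hx).1).continuousAt.tendsto
  have hcard : (insert a (insert b s)).card = s.card + 2 := by
    have hbs : b ∉ s := fun h => lt_irrefl b (hs b h).1.2
    have has : a ∉ insert b s := by
      simp only [Finset.mem_insert, not_or]
      exact ⟨hab.ne, fun h => lt_irrefl a (hs a h).1.1⟩
    rw [Finset.card_insert_of_notMem has, Finset.card_insert_of_notMem hbs]
  have hle : (insert a (insert b s)).card ≤ t.card + 1 := by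
    refine card_level_le_card_deriv_zeros_add_one (l := l) hf ?_ ?_ ?_ ht <;>
      simp only [Finset.forall_mem_insert]
    · exact ⟨left_mem_Icc.2 hab.le, right_mem_Icc.2 hab.le,
        fun x hx => Ioo_subset_Icc_self (hs x hx).1⟩
    · exact ⟨fun _ => ha, fun h => absurd h (lt_irrefl b),
        fun x hx _ => (hlim x hx).mono_left nhdsWithin_le_nhds⟩
    · exact ⟨fun h => absurd h (lt_irrefl a), fun _ => hb,
        fun x hx _ => (hlim x hx).mono_left nhdsWithin_le_nhds⟩
  lia

-- The substitution `x = tan θ` turns the behaviour at `±∞` into one-sided limits at `±π/2`.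
theorem card_level_add_one_le_card_deriv_zeros {l : ℝ} {f f' : ℝ → ℝ} {s t : Finset ℝ}
    (hf : ∀ x, HasDerivAt f (f' x) x)
    (hbot : Tendsto f atBot (𝓝 l)) (htop : Tendsto f atTop (𝓝 l))
    (hs : ∀ x ∈ s, f x = l) (ht : ∀ x, f' x = 0 → x ∈ t) : s.card + 1 ≤ t.card := by
  rw [← Finset.card_image_of_injective s arctan_injective,
    ← Finset.card_image_of_injective t arctan_injective]
  have hcos {θ} (hθ : θ ∈ Ioo (-(π / 2)) (π / 2)) : cos θ ≠ 0 := (cos_pos_of_mem_Ioo hθ).ne'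
  refine card_level_add_one_le_card_deriv_zeros_Ioo (neg_lt_self pi_div_two_pos)
    (fun θ hθ => (hf (tan θ)).comp θ (hasDerivAt_tan (hcos hθ)))
    (hbot.comp tendsto_tan_neg_pi_div_two) (htop.comp tendsto_tan_pi_div_two) ?_ ?_
  · intro θ hθ
    obtain ⟨x, hx, rfl⟩ := Finset.mem_image.1 hθ
    exact ⟨arctan_mem_Ioo x, by simpa only [Function.comp_apply, tan_arctan] using hs x hx⟩
  · intro θ hθ h0
    have hzero : f' (tan θ) = 0 :=
      (mul_eq_zero.1 h0).resolve_right (one_div_ne_zero (pow_ne_zero 2 (hcos hθ)))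
    exact Finset.mem_image.2 ⟨tan θ, ht _ hzero, arctan_tan hθ.1 hθ.2⟩

end Rolle

section RaisingOperator

theorem degree_C_mul_derivative_lt_degree_X_sub_C_mul {R : Type*} [CommRing R] [IsDomain R]
    (a b : R) {p : R[X]} (hp : p ≠ 0) :
    (C a * derivative p).degree < ((X - C b) * p).degree := by
  have hleft : (C a * derivative p).degree < p.degree := by
    rw [← smul_eq_C_mul]
    exact (degree_smul_le a _).trans_lt (degree_derivative_lt hp)
  have hright : p.degree ≤ ((X - C b) * p).degree := by
    rw [mul_comm]
    exact degree_le_mul_left p (X_sub_C_ne_zero b)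
  exact hleft.trans_le hright

variable {K : Type*} [Field K]

/-- The raising operator `p ↦ (X - d/2) p - p'/2` of the weight `exp (-x² + d x)`, normalized so as
to map monic polynomials to monic ones. -/
noncomputable def hermiteRaise (d : K) : K[X] →ₗ[K] K[X] :=
  LinearMap.mulLeft K (X - C (d / 2)) - (2⁻¹ : K) • derivative

theorem hermiteRaise_apply (d : K) (p : K[X]) :
    hermiteRaise d p = (X - C (d / 2)) * p - C 2⁻¹ * derivative p := by
  simp [hermiteRaise, smul_eq_C_mul]

theorem mul_hermiteRaise (c d : K) (q p : K[X]) :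
    q * hermiteRaise d p = hermiteRaise c (q * p) + C ((c - d) / 2) * (q * p)
      + C 2⁻¹ * (derivative q * p) := by
  simp only [hermiteRaise_apply, derivative_mul, sub_div, C_sub]
  ring

theorem natDegree_hermiteRaise (d : K) {p : K[X]} (hp : p ≠ 0) :
    (hermiteRaise d p).natDegree = p.natDegree + 1 := by
  rw [hermiteRaise_apply, natDegree_eq_of_degree_eq (degree_sub_eq_left_of_degree_lt
      (degree_C_mul_derivative_lt_degree_X_sub_C_mul _ _ hp)),
    natDegree_mul (X_sub_C_ne_zero _) hp, natDegree_X_sub_C, add_comm]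

theorem hermiteRaise_ne_zero (d : K) {p : K[X]} (hp : p ≠ 0) : hermiteRaise d p ≠ 0 :=
  ne_zero_of_natDegree_gt (n := p.natDegree) (by rw [natDegree_hermiteRaise d hp]; lia)

theorem leadingCoeff_hermiteRaise (d : K) {p : K[X]} (hp : p ≠ 0) :
    (hermiteRaise d p).leadingCoeff = p.leadingCoeff := by
  rw [hermiteRaise_apply, leadingCoeff_sub_of_degree_lt
      (degree_C_mul_derivative_lt_degree_X_sub_C_mul _ _ hp),
    leadingCoeff_mul, leadingCoeff_X_sub_C, one_mul]

theorem isMonicOfDegree_hermiteRaise (d : K) {p : K[X]} {n : ℕ} (hp : IsMonicOfDegree p n) :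
    IsMonicOfDegree (hermiteRaise d p) (n + 1) where
  natDegree_eq := by rw [natDegree_hermiteRaise d hp.ne_zero, hp.natDegree_eq]
  monic := by rw [Monic, leadingCoeff_hermiteRaise d hp.ne_zero, hp.leadingCoeff_eq]

theorem exists_hermiteRaise_add_C (d : K) (p : K[X]) :
    ∃ (q : K[X]) (k : K), hermiteRaise d q + C k = p := by
  induction h : p.natDegree using Nat.strong_induction_on generalizing p with
  | _ N ih =>
    subst h
    by_cases hp : p.natDegree = 0
    · exact ⟨0, p.coeff 0, by rw [map_zero, zero_add, ← eq_C_of_natDegree_eq_zero hp]⟩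
    set r := C (d / 2) * p.divX + C 2⁻¹ * derivative p.divX
    have hr_lt : r.natDegree < p.natDegree := by
      have hdivX : p.divX.natDegree < p.natDegree := by
        rw [natDegree_divX_eq_natDegree_tsub_one]
        lia
      have hderiv : (derivative p.divX).natDegree ≤ p.divX.natDegree :=
        (natDegree_derivative_le _).trans (Nat.sub_le _ _)
      exact (natDegree_add_le_of_degree_le (natDegree_C_mul_le _ _)
        ((natDegree_C_mul_le _ _).trans hderiv)).trans_lt hdivX
    obtain ⟨q, k, hq⟩ := ih _ hr_lt r rfl
    refine ⟨p.divX + q, k + p.coeff 0, ?_⟩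
    rw [map_add, C_add, hermiteRaise_apply d p.divX]
    linear_combination hq + divX_mul_X_add p

end RaisingOperator

section HermiteFunctional

open Filter Topology

theorem integrable_eval_mul_exp_neg_mul_sq {b : ℝ} (hb : 0 < b) (p : ℝ[X]) :
    Integrable fun x : ℝ => p.eval x * exp (-b * x ^ 2) := by
  induction p using Polynomial.induction_on' with
  | add p q hp hq => simpa only [eval_add, add_mul, Pi.add_def] using hp.add hq
  | monomial k a =>
    have hk : (-1 : ℝ) < k := neg_one_lt_zero.trans_le k.cast_nonneg
    simpa only [eval_monomial, mul_assoc, rpow_natCast]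
      using (integrable_rpow_mul_exp_neg_mul_sq hb hk).const_mul a

/-- The weight `exp (-x² + c x)` of the multiple Hermite polynomials. -/
noncomputable def hermiteWeight (c x : ℝ) : ℝ :=
  exp (-x ^ 2 + c * x)

theorem integrable_eval_mul_hermiteWeight (c : ℝ) (p : ℝ[X]) :
    Integrable fun x => p.eval x * hermiteWeight c x := by
  have complete_square (x : ℝ) :
      hermiteWeight c x = exp (-1 * (x - c / 2) ^ 2) * exp (c ^ 2 / 4) := by
    rw [hermiteWeight, ← exp_add]
    ring_nf
  have hshift := (integrable_eval_mul_exp_neg_mul_sq one_pos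
    (p.comp (X + C (c / 2)))).comp_sub_right (c / 2)
  simpa only [complete_square, eval_comp, eval_add, eval_X, eval_C, sub_add_cancel, mul_assoc]
    using hshift.mul_const (exp (c ^ 2 / 4))

theorem hasDerivAt_eval_mul_hermiteWeight (c : ℝ) (p : ℝ[X]) (x : ℝ) :
    HasDerivAt (fun x => p.eval x * hermiteWeight c x)
      (((-2 : ℝ) • hermiteRaise c p).eval x * hermiteWeight c x) x := by
  have hexponent : HasDerivAt (fun x : ℝ => -x ^ 2 + c * x) (-(2 * x) + c) x := by
    simpa using! (hasDerivAt_pow 2 x).neg.add ((hasDerivAt_id x).const_mul c)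
  refine ((p.hasDerivAt x).mul hexponent.exp).congr_deriv ?_
  simp only [hermiteWeight, hermiteRaise_apply, neg_smul, eval_neg, eval_smul, eval_sub, eval_mul,
    eval_X, eval_C, smul_eq_mul, neg_mul]
  ring

theorem tendsto_eval_mul_hermiteWeight_atBot (c : ℝ) (p : ℝ[X]) :
    Tendsto (fun x => p.eval x * hermiteWeight c x) atBot (𝓝 0) :=
  tendsto_zero_of_hasDerivAt_of_integrableOn_Iic (a := 0)
    (fun x _ => hasDerivAt_eval_mul_hermiteWeight c p x)
    (integrable_eval_mul_hermiteWeight c _).integrableOn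
    (integrable_eval_mul_hermiteWeight c p).integrableOn

theorem tendsto_eval_mul_hermiteWeight_atTop (c : ℝ) (p : ℝ[X]) :
    Tendsto (fun x => p.eval x * hermiteWeight c x) atTop (𝓝 0) :=
  tendsto_zero_of_hasDerivAt_of_integrableOn_Ioi (a := 0)
    (fun x _ => hasDerivAt_eval_mul_hermiteWeight c p x)
    (integrable_eval_mul_hermiteWeight c _).integrableOn
    (integrable_eval_mul_hermiteWeight c p).integrableOn

/-- The linear functional integrating a polynomial against `hermiteWeight c`, in terms of which the
orthogonality conditions are stated. -/
noncomputable def hermiteIntegral (c : ℝ) : ℝ[X] →ₗ[ℝ] ℝ where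
  toFun p := ∫ x, p.eval x * hermiteWeight c x
  map_add' p q := by
    simp only [eval_add, add_mul]
    exact integral_add (integrable_eval_mul_hermiteWeight c p)
      (integrable_eval_mul_hermiteWeight c q)
  map_smul' a p := by
    simp only [eval_smul, smul_eq_mul, mul_assoc, integral_const_mul, RingHom.id_apply]

theorem hermiteIntegral_apply (c : ℝ) (p : ℝ[X]) :
    hermiteIntegral c p = ∫ x, p.eval x * hermiteWeight c x := rfl

theorem hermiteIntegral_one_pos (c : ℝ) : 0 < hermiteIntegral c 1 := by
  have hint := integrable_eval_mul_hermiteWeight c 1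
  simp only [hermiteWeight, eval_one, one_mul] at hint
  simpa only [hermiteIntegral_apply, hermiteWeight, eval_one, one_mul] using integral_exp_pos hint

theorem hermiteIntegral_hermiteRaise (c : ℝ) (p : ℝ[X]) :
    hermiteIntegral c (hermiteRaise c p) = 0 := by
  have h : hermiteIntegral c ((-2 : ℝ) • hermiteRaise c p) = 0 :=
    integral_eq_zero_of_hasDerivAt_of_integrable (hasDerivAt_eval_mul_hermiteWeight c p)
      (integrable_eval_mul_hermiteWeight c _) (integrable_eval_mul_hermiteWeight c p)
  rw [map_smul, smul_eq_mul] at h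
  exact (mul_eq_zero.1 h).resolve_left (by norm_num)

theorem hermiteIntegral_X_pow_mul_hermiteRaise (c d : ℝ) (k : ℕ) (p : ℝ[X]) :
    hermiteIntegral c (X ^ k * hermiteRaise d p) =
      (c - d) / 2 * hermiteIntegral c (X ^ k * p)
        + k / 2 * hermiteIntegral c (X ^ (k - 1) * p) := by
  have hderiv : C 2⁻¹ * (derivative (X ^ k) * p) = (k / 2 : ℝ) • (X ^ (k - 1) * p) := by
    rw [derivative_X_pow, smul_eq_C_mul, div_eq_inv_mul, C_mul]
    ring
  rw [mul_hermiteRaise c, hderiv, ← smul_eq_C_mul]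
  simp only [map_add, map_smul, smul_eq_mul, hermiteIntegral_hermiteRaise, zero_add]

theorem ker_hermiteIntegral (c : ℝ) :
    LinearMap.ker (hermiteIntegral c) = LinearMap.range (hermiteRaise c) := by
  refine le_antisymm (fun p hp => ?_) ?_
  · obtain ⟨q, k, rfl⟩ := exists_hermiteRaise_add_C c p
    have hk : k * hermiteIntegral c 1 = 0 := by
      rw [LinearMap.mem_ker, map_add, hermiteIntegral_hermiteRaise, zero_add, ← mul_one (C k),
        ← smul_eq_C_mul, map_smul, smul_eq_mul] at hp
      exact hp
    have hk0 : k = 0 := (mul_eq_zero.1 hk).resolve_right (hermiteIntegral_one_pos c).ne'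
    exact ⟨q, by rw [hk0, C_0, add_zero]⟩
  · rintro _ ⟨q, rfl⟩
    exact hermiteIntegral_hermiteRaise c q

theorem card_roots_add_one_le_card_roots_hermiteRaise (d : ℝ) {p : ℝ[X]} (hp : p ≠ 0) :
    p.roots.toFinset.card + 1 ≤ (hermiteRaise d p).roots.toFinset.card := by
  refine card_level_add_one_le_card_deriv_zeros (hasDerivAt_eval_mul_hermiteWeight d p)
    (tendsto_eval_mul_hermiteWeight_atBot d p) (tendsto_eval_mul_hermiteWeight_atTop d p)
    (fun x hx => ?_) (fun x hx => ?_)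
  · rw [Multiset.mem_toFinset, mem_roots hp, IsRoot.def] at hx
    rw [hx, zero_mul]
  · rw [Multiset.mem_toFinset, mem_roots (hermiteRaise_ne_zero d hp), IsRoot.def]
    simpa [hermiteWeight, exp_ne_zero] using hx

end HermiteFunctional

section MultiIndex

theorem multiIndex_induction {ι : Type*} [Finite ι] [DecidableEq ι] {motive : (ι → ℕ) → Prop}
    (zero : motive 0) (add_single : ∀ n j, motive n → motive (n + Pi.single j 1)) (n : ι → ℕ) :
    motive n := by
  suffices h : ∀ m, motive m → motive (m + n) from zero_add n ▸ h 0 zero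
  induction n using Pi.single_induction with
  | zero => exact fun m hm => (add_zero m).symm ▸ hm
  | add f g hf hg => exact fun m hm => add_assoc m f g ▸ hg _ (hf m hm)
  | single j k =>
    induction k with
    | zero => exact fun m hm => by rwa [Pi.single_zero, add_zero]
    | succ k ih =>
      intro m hm
      rw [Pi.single_add, ← add_assoc]
      exact add_single _ j (ih m hm)

theorem sum_add_single_one {ι : Type*} [Fintype ι] [DecidableEq ι] (n : ι → ℕ) (j : ι) :
    ∑ i, (n + Pi.single j 1 : ι → ℕ) i = ∑ i, n i + 1 := by
  simp [Finset.sum_add_distrib]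

end MultiIndex

section Orthogonality

variable {ι : Type*} {c : ι → ℝ} {n : ι → ℕ} {P Q : ℝ[X]}

/-- The orthogonality conditions of type II multiple Hermite polynomials: `P` is orthogonal to
`X ^ k`, `k < n j`, with respect to the weight `exp (-x² + c j x)`, for each `j`. -/
def IsHermiteOrthogonal (c : ι → ℝ) (n : ι → ℕ) (P : ℝ[X]) : Prop :=
  ∀ j, ∀ k < n j, hermiteIntegral (c j) (X ^ k * P) = 0

theorem isHermiteOrthogonal_iff : IsHermiteOrthogonal c n P ↔
    ∀ j, ∀ k < n j, ∫ x : ℝ, x ^ k * P.eval x * exp (-x ^ 2 + c j * x) = 0 := by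
  simp only [IsHermiteOrthogonal, hermiteIntegral_apply, hermiteWeight, eval_mul, eval_pow, eval_X]

namespace IsHermiteOrthogonal

theorem sub (hP : IsHermiteOrthogonal c n P) (hQ : IsHermiteOrthogonal c n Q) :
    IsHermiteOrthogonal c n (P - Q) := by
  intro j k hk
  rw [mul_sub, map_sub, hP j k hk, hQ j k hk, sub_zero]

variable [DecidableEq ι] {j : ι}

theorem raise (h : IsHermiteOrthogonal c n P) :
    IsHermiteOrthogonal c (n + Pi.single j 1) (hermiteRaise (c j) P) := by
  intro i k hk
  rw [hermiteIntegral_X_pow_mul_hermiteRaise]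
  rcases eq_or_ne i j with rfl | hij
  · rw [Pi.add_apply, Pi.single_eq_same] at hk
    cases k with
    | zero => simp
    | succ k => rw [sub_self, Nat.add_sub_cancel, h i k (by lia)]; ring
  · rw [Pi.add_apply, Pi.single_eq_of_ne hij, add_zero] at hk
    rw [h i k hk, h i (k - 1) (by lia)]
    ring

theorem of_raise (hc : Function.Injective c)
    (h : IsHermiteOrthogonal c (n + Pi.single j 1) (hermiteRaise (c j) P)) :
    IsHermiteOrthogonal c n P := by
  intro i k hk
  rcases eq_or_ne i j with rfl | hij
  · have hzero := h i (k + 1) (by simpa using hk)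
    rw [hermiteIntegral_X_pow_mul_hermiteRaise, sub_self, zero_div, zero_mul, zero_add,
      Nat.add_sub_cancel] at hzero
    exact (mul_eq_zero.1 hzero).resolve_left (by positivity)
  · have hne : (c i - c j) / 2 ≠ 0 := div_ne_zero (sub_ne_zero.2 (hc.ne hij)) two_ne_zero
    induction k with
    | zero =>
      have hzero := h i 0 (by simpa [hij] using hk)
      rw [hermiteIntegral_X_pow_mul_hermiteRaise] at hzero
      simpa [hne] using hzero
    | succ k ih =>
      have hzero := h i (k + 1) (by simpa [hij] using hk)
      rw [hermiteIntegral_X_pow_mul_hermiteRaise, Nat.add_sub_cancel, ih (by lia), mul_zero,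
        add_zero] at hzero
      exact (mul_eq_zero.1 hzero).resolve_left hne

theorem exists_hermiteRaise_eq (hc : Function.Injective c)
    (h : IsHermiteOrthogonal c (n + Pi.single j 1) P) :
    ∃ Q, IsHermiteOrthogonal c n Q ∧ hermiteRaise (c j) Q = P := by
  have hker : P ∈ LinearMap.ker (hermiteIntegral (c j)) := by
    simpa using h j 0 (by simp)
  rw [ker_hermiteIntegral] at hker
  obtain ⟨Q, rfl⟩ := hker
  exact ⟨Q, h.of_raise hc, rfl⟩

end IsHermiteOrthogonal

variable [Fintype ι]

theorem IsHermiteOrthogonal.sum_le_natDegree (hc : Function.Injective c)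
    (h : IsHermiteOrthogonal c n P) (hP : P ≠ 0) : ∑ j, n j ≤ P.natDegree := by
  classical
  induction n using multiIndex_induction generalizing P with
  | zero => simp
  | add_single n j ih =>
    obtain ⟨Q, hQ, rfl⟩ := h.exists_hermiteRaise_eq hc
    have hQ0 : Q ≠ 0 := by
      rintro rfl
      exact hP (map_zero _)
    rw [sum_add_single_one, natDegree_hermiteRaise _ hQ0]
    exact Nat.succ_le_succ (ih hQ hQ0)

theorem IsHermiteOrthogonal.eq_of_isMonicOfDegree (hc : Function.Injective c)
    (hP : IsHermiteOrthogonal c n P) (hPm : IsMonicOfDegree P (∑ j, n j))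
    (hQ : IsHermiteOrthogonal c n Q) (hQm : IsMonicOfDegree Q (∑ j, n j)) : P = Q := by
  by_contra hne
  have hsub : P - Q ≠ 0 := sub_ne_zero.2 hne
  have hdeg : P.degree = Q.degree := by
    rw [degree_eq_natDegree hPm.ne_zero, degree_eq_natDegree hQm.ne_zero, hPm.natDegree_eq,
      hQm.natDegree_eq]
  have hlt : (P - Q).natDegree < P.natDegree :=
    natDegree_lt_natDegree hsub <| degree_sub_lt_left hdeg hPm.ne_zero
      (by rw [hPm.leadingCoeff_eq, hQm.leadingCoeff_eq])
  rw [hPm.natDegree_eq] at hlt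
  exact hlt.not_ge ((hP.sub hQ).sum_le_natDegree hc hsub)

theorem exists_isHermiteOrthogonal_isMonicOfDegree (c : ι → ℝ) (n : ι → ℕ) :
    ∃ P : ℝ[X], IsMonicOfDegree P (∑ j, n j) ∧ IsHermiteOrthogonal c n P ∧
      ∑ j, n j ≤ P.roots.toFinset.card := by
  classical
  induction n using multiIndex_induction with
  | zero => exact ⟨1, by simp, by simp [IsHermiteOrthogonal], by simp⟩
  | add_single n j ih =>
    obtain ⟨P, hmonic, horth, hroots⟩ := ih
    rw [sum_add_single_one]
    exact ⟨hermiteRaise (c j) P, isMonicOfDegree_hermiteRaise (c j) hmonic, horth.raise,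
      (Nat.succ_le_succ hroots).trans
        (card_roots_add_one_le_card_roots_hermiteRaise (c j) hmonic.ne_zero)⟩

end Orthogonality

theorem card_roots_eq_natDegree_and_nodup_roots {R : Type*} [CommRing R] [IsDomain R]
    [DecidableEq R] {p : R[X]} (h : p.natDegree ≤ p.roots.toFinset.card) :
    p.roots.card = p.natDegree ∧ p.roots.Nodup := by
  have hle : p.roots.toFinset.card ≤ p.roots.card := p.roots.toFinset_card_le
  have hcard : p.roots.card = p.natDegree := le_antisymm p.card_roots' (h.trans hle)
  exact ⟨hcard, Multiset.toFinset_card_eq_card_iff_nodup.1 (le_antisymm hle (hcard ▸ h))⟩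

/-- For pairwise distinct parameters `c_1, …, c_r` there exists a unique monic
multiple Hermite polynomial of degree `n_1 + ⋯ + n_r`, and all of its
`n_1 + ⋯ + n_r` zeros are real and simple. -/
theorem multiple_hermite_exists_unique_simple_real_zeros
    (r : ℕ) (hr : 1 ≤ r) (c : Fin r → ℝ) (hc : Function.Injective c)
    (n : Fin r → ℕ) :
    ∃ P : Polynomial ℝ,
      (P.Monic ∧ P.natDegree = ∑ j, n j ∧
        ∀ j : Fin r, ∀ k < n j,
          ∫ x : ℝ, x ^ k * P.eval x * Real.exp (-x ^ 2 + c j * x) = 0) ∧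
      Multiset.card P.roots = ∑ j, n j ∧ P.roots.Nodup ∧
      ∀ Q : Polynomial ℝ,
        (Q.Monic ∧ Q.natDegree = ∑ j, n j ∧
          ∀ j : Fin r, ∀ k < n j,
            ∫ x : ℝ, x ^ k * Q.eval x * Real.exp (-x ^ 2 + c j * x) = 0) →
        Q = P := by
  obtain ⟨P, hP, horth, hroots⟩ := exists_isHermiteOrthogonal_isMonicOfDegree c n
  rw [← hP.natDegree_eq] at hroots
  obtain ⟨hcard, hnodup⟩ := card_roots_eq_natDegree_and_nodup_roots hroots
  refine ⟨P, ⟨hP.monic, hP.natDegree_eq, isHermiteOrthogonal_iff.1 horth⟩,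
    hcard.trans hP.natDegree_eq, hnodup, ?_⟩
  rintro Q ⟨hQmonic, hQdeg, hQorth⟩
  exact (isHermiteOrthogonal_iff.2 hQorth).eq_of_isMonicOfDegree hc ⟨hQdeg, hQmonic⟩ horth hP
end

section
/- Let Δ_1,…,Δ_r be pairwise disjoint compact intervals of ℝ and let μ_1,…,μ_r be finite positive Borel measures such that each μ_j has infinite support contained in Δ_j. Then for every multi-index (n_1,…,n_r) ∈ ℕ^r there exists a unique monic real polynomial P of degree |n̄| = n_1+⋯+n_r satisfying ∫ x^k P(x) dμ_j(x) = 0 for all 1 ≤ j ≤ r and 0 ≤ k ≤ n_j−1, and P has exactly n_j simple zeros in each interval Δ_j (so all its zeros are real and simple). -/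
open MeasureTheory Polynomial Real
open scoped Classical

/-- The support of a Borel measure on `ℝ`: the set of points all of whose
neighborhoods have positive measure. -/
def measureSupport (μ : MeasureTheory.Measure ℝ) : Set ℝ :=
  {x | ∀ ε > 0, 0 < μ (Set.Ioo (x - ε) (x + ε))}

/-!
If `P ≠ 0` is orthogonal to `1, x, …, x ^ (m - 1)` for a measure `μ` carried by an interval `Δ` and
having infinite support, then `P` has at least `m` distinct zeros in `Δ`: let `S` be the set of
zeros of odd multiplicity in `Δ`; then `P * ∏ s ∈ S, (X - s)` has constant sign on `Δ`, so its
integral does not vanish, whereas orthogonality would make it vanish if `S` had fewer than `m`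
elements. As the intervals are disjoint, these zeros add up, so a nonzero polynomial satisfying all
the orthogonality conditions has degree at least `∑ j, n j`. Hence the square linear system for the
lower coefficients of the monic polynomial is nonsingular, and all the inequalities between numbers
of zeros of its solution are equalities.
-/

open Module Function

section Counting

variable {ι α : Type*} [Fintype ι] {Δ : ι → Set α} [∀ j, DecidablePred (· ∈ Δ j)]

theorem sum_card_filter_mem_le_card (hΔ : Pairwise (Disjoint on Δ)) (s : Finset α) :
    ∑ j, (s.filter (· ∈ Δ j)).card ≤ s.card := by
  have hdisj : ((Finset.univ : Finset ι) : Set ι).PairwiseDisjoint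
      fun j ↦ s.filter (· ∈ Δ j) := fun i _ j _ hij ↦
    Finset.disjoint_filter.mpr fun _ _ hi ↦ Set.disjoint_left.mp (hΔ hij) hi
  rw [← Finset.card_biUnion hdisj]
  exact Finset.card_le_card (Finset.biUnion_subset.mpr fun _ _ ↦ Finset.filter_subset _ _)

theorem nodup_and_card_filter_mem_eq_of_card_le [DecidableEq α] (hΔ : Pairwise (Disjoint on Δ))
    {m : Multiset α} {n : ι → ℕ} (hle : ∀ j, n j ≤ (m.toFinset.filter (· ∈ Δ j)).card)
    (hm : Multiset.card m ≤ ∑ j, n j) :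
    Multiset.card m = ∑ j, n j ∧ m.Nodup ∧ ∀ j, Multiset.card (m.filter (· ∈ Δ j)) = n j := by
  have hsum := Finset.sum_le_sum fun j (_ : j ∈ Finset.univ) ↦ hle j
  have hdistinct := sum_card_filter_mem_le_card hΔ m.toFinset
  have hmult := m.toFinset_card_le
  have hnodup : m.Nodup := Multiset.toFinset_card_eq_card_iff_nodup.mp (by lia)
  refine ⟨by lia, hnodup, fun j ↦ ?_⟩
  rw [← Multiset.toFinset_card_of_nodup (hnodup.filter _), Multiset.toFinset_filter]
  exact ((Finset.sum_eq_sum_iff_of_le fun j _ ↦ hle j).mp (by lia) j (Finset.mem_univ j)).symm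

end Counting

theorem exists_subset_toFinset_isSquare_prod_mul_prod_map {M α : Type*} [CommMonoid M]
    [DecidableEq α] (m : Multiset α) (f : α → M) :
    ∃ S ⊆ m.toFinset, IsSquare ((∏ s ∈ S, f s) * (m.map f).prod) := by
  refine ⟨{s ∈ m.toFinset | Odd (m.count s)}, Finset.filter_subset _ _, ?_⟩
  rw [Finset.prod_filter, Finset.prod_multiset_map_count, ← Finset.prod_mul_distrib]
  refine Finset.isSquare_prod _ fun s _ ↦ ?_
  split_ifs with hodd
  · rw [← pow_succ']
    exact hodd.add_one.isSquare_pow _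
  · rw [one_mul]
    exact (Nat.not_odd_iff_even.mp hodd).isSquare_pow _

theorem forall_nonneg_or_forall_nonpos_of_forall_ne_zero {E α : Type*} [TopologicalSpace E]
    [LinearOrder α] [Zero α] [TopologicalSpace α] [OrderClosedTopology α] {A : Set E}
    (hA : IsPreconnected A) {f : E → α} (hf : ContinuousOn f A) (hne : ∀ x ∈ A, f x ≠ 0) :
    (∀ x ∈ A, 0 ≤ f x) ∨ ∀ x ∈ A, f x ≤ 0 := by
  by_contra! ⟨⟨x, hx, hxneg⟩, y, hy, hypos⟩
  obtain ⟨c, hc, hzero⟩ := hA.intermediate_value hx hy hf ⟨hxneg.le, hypos.le⟩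
  exact hne c hc hzero

section Polynomial

theorem exists_prod_roots_mem_mul_eq {R : Type*} [CommRing R] [IsDomain R] (A : Set R)
    [DecidablePred (· ∈ A)] {P : R[X]} (hP : P ≠ 0) :
    ∃ Q : R[X], ((P.roots.filter (· ∈ A)).map fun c ↦ X - C c).prod * Q = P ∧
      ∀ c ∈ A, ¬ Q.IsRoot c := by
  obtain ⟨Q, hQ⟩ := (Multiset.prod_X_sub_C_dvd_iff_le_roots hP _).mpr
    (Multiset.filter_le (· ∈ A) P.roots)
  refine ⟨Q, hQ.symm, fun c hc hroot ↦ ?_⟩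
  have hQ0 : Q ≠ 0 := right_ne_zero_of_mul (hQ ▸ hP)
  have hroots : P.roots = P.roots.filter (· ∈ A) + Q.roots := by
    conv_lhs => rw [hQ, roots_mul (hQ ▸ hP), roots_multiset_prod_X_sub_C]
  have hcount : P.roots.count c = P.roots.count c + Q.roots.count c := by
    conv_lhs => rw [hroots, Multiset.count_add, Multiset.count_filter_of_pos hc]
  have hpos : 0 < Q.roots.count c := Multiset.count_pos.mpr ((mem_roots hQ0).mpr hroot)
  lia

theorem exists_subset_roots_nonneg_or_nonpos_mul {I : Set ℝ} (hI : IsPreconnected I)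
    [DecidablePred (· ∈ I)] {P : ℝ[X]} (hP : P ≠ 0) :
    ∃ S ⊆ P.roots.toFinset.filter (· ∈ I),
      (∀ x ∈ I, 0 ≤ ((∏ s ∈ S, (X - C s)) * P).eval x) ∨
        ∀ x ∈ I, ((∏ s ∈ S, (X - C s)) * P).eval x ≤ 0 := by
  obtain ⟨Q, hQP, hQ⟩ := exists_prod_roots_mem_mul_eq I hP
  obtain ⟨S, hS, D, hD⟩ := exists_subset_toFinset_isSquare_prod_mul_prod_map
    (P.roots.filter (· ∈ I)) fun c ↦ X - C c
  rw [Multiset.toFinset_filter] at hS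
  have heval (x : ℝ) : ((∏ s ∈ S, (X - C s)) * P).eval x = D.eval x * D.eval x * Q.eval x := by
    rw [← hQP, ← mul_assoc, hD, eval_mul, eval_mul]
  refine ⟨S, hS, ?_⟩
  simp only [heval]
  exact (forall_nonneg_or_forall_nonpos_of_forall_ne_zero hI Q.continuousOn hQ).imp
    (fun h x hx ↦ mul_nonneg (mul_self_nonneg _) (h x hx))
    fun h x hx ↦ mul_nonpos_of_nonneg_of_nonpos (mul_self_nonneg _) (h x hx)

theorem map_mul_eq_zero_of_natDegree_lt {R M : Type*} [Semiring R] [AddCommMonoid M]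
    [Module R M] (φ : R[X] →ₗ[R] M) {m : ℕ} {P T : R[X]} (hφ : ∀ k < m, φ (X ^ k * P) = 0)
    (hT : T.natDegree < m) : φ (T * P) = 0 := by
  rw [T.as_sum_range_C_mul_X_pow' hT, Finset.sum_mul, map_sum]
  refine Finset.sum_eq_zero fun k hk ↦ ?_
  rw [mul_assoc, ← smul_eq_C_mul, map_smul, hφ k (Finset.mem_range.mp hk), smul_zero]

theorem existsUnique_monic_natDegree_eq_finrank_map_eq_zero {K V : Type*} [DivisionRing K]
    [AddCommGroup V] [Module K V] [FiniteDimensional K V] (φ : K[X] →ₗ[K] V)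
    (hφ : ∀ Q : K[X], Q.degree < finrank K V → φ Q = 0 → Q = 0) :
    ∃! P : K[X], P.Monic ∧ P.natDegree = finrank K V ∧ φ P = 0 := by
  set N := finrank K V
  let φN : degreeLT K N →ₗ[K] V := φ.domRestrict (degreeLT K N)
  have hinj : Injective φN := (injective_iff_map_eq_zero φN).mpr fun Q hQ ↦
    Subtype.ext (hφ Q (mem_degreeLT.mp Q.2) hQ)
  have : FiniteDimensional K (degreeLT K N) := .equiv (degreeLTEquiv K N).symm
  have hrank : finrank K (degreeLT K N) = finrank K V := by
    rw [(degreeLTEquiv K N).finrank_eq, finrank_fin_fun]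
  obtain ⟨⟨Q, hQmem⟩, hQ⟩ :=
    (LinearMap.injective_iff_surjective_of_finrank_eq_finrank hrank).mp hinj (φ (X ^ N))
  have hQdeg : Q.degree < N := mem_degreeLT.mp hQmem
  have hmonic : (X ^ N - Q).Monic := monic_X_pow_sub hQdeg
  have hdeg : (X ^ N - Q).degree = (N : WithBot ℕ) := by
    rw [degree_sub_eq_left_of_degree_lt (by rwa [degree_X_pow]), degree_X_pow]
  have hzero : φ (X ^ N - Q) = 0 := by
    rw [map_sub, sub_eq_zero]
    exact hQ.symm
  refine ⟨X ^ N - Q, ⟨hmonic, natDegree_eq_of_degree_eq_some hdeg, hzero⟩, ?_⟩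
  rintro P ⟨hPmonic, hPnatDegree, hP⟩
  have hPdeg : P.degree = (N : WithBot ℕ) := by
    rw [degree_eq_natDegree hPmonic.ne_zero, hPnatDegree]
  refine sub_eq_zero.mp (hφ _ ?_ (by rw [map_sub, hP, hzero, sub_zero]))
  calc (P - (X ^ N - Q)).degree < P.degree := degree_sub_lt_left (hPdeg.trans hdeg.symm)
        hPmonic.ne_zero (hPmonic.leadingCoeff.trans hmonic.leadingCoeff.symm)
    _ = N := hPdeg

end Polynomial

section Moments

variable {μ : Measure ℝ}

theorem measureSupport_eq_support (μ : Measure ℝ) : measureSupport μ = μ.support :=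
  Set.ext fun x ↦ (nhds_basis_Ioo_pos x).mem_measureSupport.symm

theorem eq_zero_of_ae_isRoot (hμ : μ.support.Infinite) {P : ℝ[X]} (hP : ∀ᵐ x ∂μ, P.IsRoot x) :
    P = 0 :=
  P.eq_zero_of_infinite_isRoot <|
    hμ.mono (Measure.support_subset_of_isClosed (isClosed_eq P.continuous continuous_const) hP)

/-- All moments of `μ` exist: the standing assumption under which every polynomial can be integrated
against `μ`. It includes the finiteness of `μ`, as the moment of order `0`. -/
def HasFiniteMoments (μ : Measure ℝ) : Prop :=
  ∀ k : ℕ, Integrable (fun x ↦ x ^ k) μ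

theorem hasFiniteMoments_of_ae_mem_isCompact [IsFiniteMeasureOnCompacts μ] {K : Set ℝ}
    (hK : IsCompact K) (hμ : ∀ᵐ x ∂μ, x ∈ K) : HasFiniteMoments μ := fun k ↦ by
  rw [← Measure.restrict_eq_self_of_ae_mem hμ]
  exact (continuous_pow k).continuousOn.integrableOn_compact hK

theorem HasFiniteMoments.integrable_eval (hμ : HasFiniteMoments μ) (P : ℝ[X]) :
    Integrable (fun x ↦ P.eval x) μ := by
  simp only [eval_eq_sum_range]
  exact integrable_finsetSum _ fun k _ ↦ (hμ k).const_mul _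

/-- The moment functional `P ↦ ∫ P dμ` of a measure all of whose moments exist, as a linear
functional on polynomials. -/
noncomputable def momentFunctional (hμ : HasFiniteMoments μ) : ℝ[X] →ₗ[ℝ] ℝ where
  toFun P := ∫ x, P.eval x ∂μ
  map_add' P Q := by
    simp only [eval_add, integral_add (hμ.integrable_eval P) (hμ.integrable_eval Q)]
  map_smul' c P := by
    simp only [eval_smul, integral_smul, RingHom.id_apply]

theorem momentFunctional_X_pow_mul (hμ : HasFiniteMoments μ) (k : ℕ) (P : ℝ[X]) :
    momentFunctional hμ (X ^ k * P) = ∫ x, x ^ k * P.eval x ∂μ := by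
  simp only [momentFunctional, LinearMap.coe_mk, AddHom.coe_mk, eval_mul, eval_pow, eval_X]

theorem eq_zero_of_momentFunctional_eq_zero (hμ : HasFiniteMoments μ) (hinf : μ.support.Infinite)
    {P : ℝ[X]} (hP : ∀ᵐ x ∂μ, 0 ≤ P.eval x) (hzero : momentFunctional hμ P = 0) : P = 0 :=
  eq_zero_of_ae_isRoot hinf <|
    (integral_eq_zero_iff_of_nonneg_ae hP (hμ.integrable_eval P)).mp hzero

theorem le_card_roots_filter_mem_of_orthogonal {I : Set ℝ} (hI : IsPreconnected I)
    [DecidablePred (· ∈ I)] (hμ : HasFiniteMoments μ) (hμI : ∀ᵐ x ∂μ, x ∈ I)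
    (hinf : μ.support.Infinite) {m : ℕ} {P : ℝ[X]} (hP : P ≠ 0)
    (horth : ∀ k < m, ∫ x, x ^ k * P.eval x ∂μ = 0) :
    m ≤ (P.roots.toFinset.filter (· ∈ I)).card := by
  obtain ⟨S, hS, hsign⟩ := exists_subset_roots_nonneg_or_nonpos_mul hI hP
  refine le_trans ?_ (Finset.card_le_card hS)
  by_contra! hlt
  have hne : (∏ s ∈ S, (X - C s)) * P ≠ 0 :=
    mul_ne_zero (Finset.prod_ne_zero_iff.mpr fun s _ ↦ X_sub_C_ne_zero s) hP
  have hzero : momentFunctional hμ ((∏ s ∈ S, (X - C s)) * P) = 0 :=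
    map_mul_eq_zero_of_natDegree_lt _
      (fun k hk ↦ (momentFunctional_X_pow_mul hμ k P).trans (horth k hk))
      (by rwa [natDegree_finsetProd_X_sub_C_eq_card S fun s ↦ s])
  rcases hsign with hnonneg | hnonpos
  · exact hne (eq_zero_of_momentFunctional_eq_zero hμ hinf (hμI.mono hnonneg) hzero)
  · refine neg_ne_zero.mpr hne (eq_zero_of_momentFunctional_eq_zero hμ hinf ?_ ?_)
    · filter_upwards [hμI] with x hx
      rw [eval_neg]
      exact neg_nonneg.mpr (hnonpos x hx)
    · rw [map_neg, hzero, neg_zero]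

end Moments

section MultipleOrthogonality

variable {ι : Type*} {μ : ι → Measure ℝ} {n : ι → ℕ}

/-- The orthogonality conditions of type II: `P` is orthogonal to all monomials of degree less than
`n j` with respect to `μ j`, for every `j`. -/
def IsMultipleOrthogonal (μ : ι → Measure ℝ) (n : ι → ℕ) (P : ℝ[X]) : Prop :=
  ∀ j, ∀ k < n j, ∫ x, x ^ k * P.eval x ∂(μ j) = 0

/-- The values of the integrals in the type II orthogonality conditions, as a linear map whose
kernel consists of the multiple orthogonal polynomials. -/
noncomputable def multipleMoments (hμ : ∀ j, HasFiniteMoments (μ j)) (n : ι → ℕ) :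
    ℝ[X] →ₗ[ℝ] (Σ j, Fin (n j)) → ℝ :=
  LinearMap.pi fun p ↦ momentFunctional (hμ p.1) ∘ₗ LinearMap.mulLeft ℝ (X ^ (p.2 : ℕ))

theorem multipleMoments_eq_zero_iff (hμ : ∀ j, HasFiniteMoments (μ j)) {P : ℝ[X]} :
    multipleMoments hμ n P = 0 ↔ IsMultipleOrthogonal μ n P := by
  simp only [funext_iff, multipleMoments, LinearMap.pi_apply, LinearMap.comp_apply,
    LinearMap.mulLeft_apply, momentFunctional_X_pow_mul, Pi.zero_apply, Sigma.forall,
    Fin.forall_iff, IsMultipleOrthogonal]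

variable [Fintype ι] {Δ : ι → Set ℝ}

theorem IsMultipleOrthogonal.sum_le_natDegree {P : ℝ[X]} (horth : IsMultipleOrthogonal μ n P)
    (hP : P ≠ 0) (hΔ : ∀ j, (Δ j).OrdConnected) (hdisj : Pairwise (Disjoint on Δ))
    (hμ : ∀ j, HasFiniteMoments (μ j)) (hμΔ : ∀ j, ∀ᵐ x ∂(μ j), x ∈ Δ j)
    (hinf : ∀ j, (μ j).support.Infinite) : ∑ j, n j ≤ P.natDegree :=
  calc ∑ j, n j ≤ ∑ j, (P.roots.toFinset.filter (· ∈ Δ j)).card :=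
        Finset.sum_le_sum fun j _ ↦ le_card_roots_filter_mem_of_orthogonal
          (hΔ j).isPreconnected (hμ j) (hμΔ j) (hinf j) hP (horth j)
    _ ≤ P.roots.toFinset.card := sum_card_filter_mem_le_card hdisj _
    _ ≤ Multiset.card P.roots := Multiset.toFinset_card_le _
    _ ≤ P.natDegree := P.card_roots'

theorem existsUnique_monic_isMultipleOrthogonal (hΔ : ∀ j, (Δ j).OrdConnected)
    (hdisj : Pairwise (Disjoint on Δ)) (hμ : ∀ j, HasFiniteMoments (μ j))
    (hμΔ : ∀ j, ∀ᵐ x ∂(μ j), x ∈ Δ j) (hinf : ∀ j, (μ j).support.Infinite) (n : ι → ℕ) :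
    ∃! P : ℝ[X], P.Monic ∧ P.natDegree = ∑ j, n j ∧ IsMultipleOrthogonal μ n P := by
  have hrank : finrank ℝ ((Σ j, Fin (n j)) → ℝ) = ∑ j, n j := by
    simp only [finrank_fintype_fun_eq_card, Fintype.card_sigma, Fintype.card_fin]
  simp only [← hrank, ← multipleMoments_eq_zero_iff hμ]
  refine existsUnique_monic_natDegree_eq_finrank_map_eq_zero _ fun Q hdeg hQ ↦ ?_
  by_contra hQ0
  rw [hrank, ← natDegree_lt_iff_degree_lt hQ0] at hdeg
  have horth := (multipleMoments_eq_zero_iff hμ).mp hQ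
  exact hdeg.not_ge (horth.sum_le_natDegree hQ0 hΔ hdisj hμ hμΔ hinf)

theorem angelesco_system_multiple_orthogonal_zeros_general [∀ j, DecidablePred (· ∈ Δ j)]
    (hΔ : ∀ j, (Δ j).OrdConnected) (hdisj : Pairwise (Disjoint on Δ))
    (hμ : ∀ j, HasFiniteMoments (μ j)) (hμΔ : ∀ j, ∀ᵐ x ∂(μ j), x ∈ Δ j)
    (hinf : ∀ j, (μ j).support.Infinite) (n : ι → ℕ) :
    ∃ P : ℝ[X],
      (P.Monic ∧ P.natDegree = ∑ j, n j ∧ IsMultipleOrthogonal μ n P) ∧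
      Multiset.card P.roots = ∑ j, n j ∧ P.roots.Nodup ∧
      (∀ j, Multiset.card (P.roots.filter (· ∈ Δ j)) = n j) ∧
      ∀ Q : ℝ[X], (Q.Monic ∧ Q.natDegree = ∑ j, n j ∧ IsMultipleOrthogonal μ n Q) → Q = P := by
  obtain ⟨P, ⟨hmonic, hdeg, horth⟩, hunique⟩ :=
    existsUnique_monic_isMultipleOrthogonal hΔ hdisj hμ hμΔ hinf n
  have hzeros (j : ι) : n j ≤ (P.roots.toFinset.filter (· ∈ Δ j)).card :=
    le_card_roots_filter_mem_of_orthogonal (hΔ j).isPreconnected (hμ j) (hμΔ j) (hinf j)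
      hmonic.ne_zero (horth j)
  obtain ⟨hcard, hnodup, hfilter⟩ :=
    nodup_and_card_filter_mem_eq_of_card_le hdisj hzeros (hdeg ▸ P.card_roots')
  exact ⟨P, ⟨hmonic, hdeg, horth⟩, hcard, hnodup, hfilter, hunique⟩

end MultipleOrthogonality

/-- Angelesco systems: if the measures `μ_1, …, μ_r` are finite with infinite
supports contained in pairwise disjoint compact intervals `Δ_j = [a_j, b_j]`, then for
every multi-index the type II multiple orthogonal polynomial exists, is unique, and has
exactly `n_j` simple zeros in each `Δ_j` (all zeros real and simple). -/
theorem angelesco_system_multiple_orthogonal_zeros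
    (r : ℕ) (hr : 1 ≤ r)
    (a b : Fin r → ℝ) (hab : ∀ j, a j < b j)
    (hdisj : ∀ i j : Fin r, i ≠ j →
      Disjoint (Set.Icc (a i) (b i)) (Set.Icc (a j) (b j)))
    (μ : Fin r → MeasureTheory.Measure ℝ)
    (hfin : ∀ j, IsFiniteMeasure (μ j))
    (hsupp : ∀ j, measureSupport (μ j) ⊆ Set.Icc (a j) (b j))
    (hinf : ∀ j, (measureSupport (μ j)).Infinite)
    (n : Fin r → ℕ) :
    ∃ P : Polynomial ℝ,
      (P.Monic ∧ P.natDegree = ∑ j, n j ∧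
        ∀ j : Fin r, ∀ k < n j, ∫ x : ℝ, x ^ k * P.eval x ∂(μ j) = 0) ∧
      Multiset.card P.roots = ∑ j, n j ∧ P.roots.Nodup ∧
      (∀ j : Fin r,
        Multiset.card (P.roots.filter (fun x => x ∈ Set.Icc (a j) (b j))) = n j) ∧
      ∀ Q : Polynomial ℝ,
        (Q.Monic ∧ Q.natDegree = ∑ j, n j ∧
          ∀ j : Fin r, ∀ k < n j, ∫ x : ℝ, x ^ k * Q.eval x ∂(μ j) = 0) →
        Q = P := by
  simp only [measureSupport_eq_support] at hsupp hinf
  have hμΔ (j : Fin r) : ∀ᵐ x ∂(μ j), x ∈ Set.Icc (a j) (b j) :=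
    Filter.mem_of_superset Measure.support_mem_ae (hsupp j)
  exact angelesco_system_multiple_orthogonal_zeros_general (fun _ ↦ Set.ordConnected_Icc)
    (fun i j ↦ hdisj i j) (fun j ↦ hasFiniteMoments_of_ae_mem_isCompact isCompact_Icc (hμΔ j))
    hμΔ hinf n
end

section
/- Suppose c > 4√(4n+1). Set I_1 = [−c/2 − √(4n+1), −c/2 + √(4n+1)], I_2 = [−√(4n+1), √(4n+1)], I_3 = [c/2 − √(4n+1), c/2 + √(4n+1)]. Then the intervals I_1, I_2, I_3 are pairwise disjoint, every zero of H_{n,n,n} lies in I_1 ∪ I_2 ∪ I_3, and each of the three intervals contains exactly n zeros of H_{n,n,n}, all of which are simple. -/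
/-!
Completing the square turns the weight `exp (-x ^ 2 + c * x)` into a Gaussian density centred at
`c / 2`. The moment functional of a Gaussian stays strictly positive on the nonzero polynomials of
degree less than `4 * n` that are nonnegative merely on the interval of radius `√(4 * n + 1)` about
its centre: the Gauss quadrature rule with `2 * n` nodes is exact in these degrees, and its nodes,
the zeros of a rescaled Hermite polynomial, lie in the interior of that interval by the Laguerre
inequality and Hermite's differential equation. If `H` changed sign fewer than `n` times in the
interval, its product with one linear factor per sign change would therefore contradict
orthogonality. Since the intervals are disjoint and `H` has degree `3 * n`, it has exactly `n` zeros
in each of them, all simple.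
-/

open MeasureTheory Polynomial Real
open scoped Classical

open Lagrange ProbabilityTheory
open scoped NNReal

section Laguerre

variable {R : Type*} [CommRing R] [LinearOrder R] [IsStrictOrderedRing R] {p : R[X]}

/- Writing `Δ p = p' ^ 2 - p * p''`, the induction uses `Δ (p * q) = p ^ 2 * Δ q + q ^ 2 * Δ p`. -/
lemma laguerre_inequality (hp : p.Splits) (x : R) :
    p.eval x * p.derivative.derivative.eval x ≤ p.derivative.eval x ^ 2 := by
  induction hp using Submonoid.closure_induction with
  | mem p hp => rcases hp with ⟨a, rfl⟩ | ⟨a, rfl⟩ <;> simp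
  | one => simp
  | mul p q _ _ ihp ihq =>
    simp only [derivative_mul, derivative_add, eval_add, eval_mul]
    nlinarith [mul_le_mul_of_nonneg_left ihp (sq_nonneg (q.eval x)),
      mul_le_mul_of_nonneg_left ihq (sq_nonneg (p.eval x))]

/- Apply the Laguerre inequality to `p / (X - x)`, whose value and first two derivatives at `x` are
`p' x`, `p'' x / 2` and `p''' x / 3`. -/
lemma laguerre_inequality_of_isRoot (hp : p.Splits) {x : R} (hx : p.IsRoot x) :
    4 * (p.derivative.eval x * p.derivative.derivative.derivative.eval x) ≤
      3 * p.derivative.derivative.eval x ^ 2 := by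
  obtain rfl | hp0 := eq_or_ne p 0
  · simp
  obtain ⟨q, rfl⟩ := dvd_iff_isRoot.mpr hx
  have hq := laguerre_inequality (hp.of_dvd hp0 (dvd_mul_left q _)) x
  simp only [derivative_mul, derivative_add, derivative_sub, derivative_X, derivative_C,
    derivative_one, derivative_zero, eval_add, eval_mul, eval_sub, eval_X, eval_C, eval_one,
    eval_zero]
  linear_combination 12 * hq

end Laguerre

section RealRoots

lemma nonneg_or_nonpos_of_forall_ne_zero {X : Type*} [TopologicalSpace X] {s : Set X} {f : X → ℝ}
    (hs : IsPreconnected s) (hf : ContinuousOn f s) (h0 : ∀ x ∈ s, f x ≠ 0) :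
    (∀ x ∈ s, 0 ≤ f x) ∨ ∀ x ∈ s, f x ≤ 0 := by
  by_contra! ⟨⟨x, hx, hfx⟩, y, hy, hfy⟩
  obtain ⟨z, hz, hfz⟩ := hs.intermediate_value hx hy hf ⟨hfx.le, hfy.le⟩
  exact h0 z hz hfz

/- `S` is the set of roots of odd multiplicity in `I`, where `p` changes sign. -/
lemma exists_mul_nodal_nonneg_or_nonpos {I : Set ℝ} (hI : I.OrdConnected) {p : ℝ[X]} (hp : p ≠ 0) :
    ∃ S ⊆ {x ∈ p.roots.toFinset | x ∈ I}, (∀ x ∈ I, 0 ≤ (p * nodal S id).eval x) ∨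
      ∀ x ∈ I, (p * nodal S id).eval x ≤ 0 := by
  induction hd : p.natDegree using Nat.strong_induction_on generalizing p with
  | _ d ih =>
    by_cases! hroot : ∀ x ∈ I, p.eval x ≠ 0
    · refine ⟨∅, Finset.empty_subset _, ?_⟩
      simpa using nonneg_or_nonpos_of_forall_ne_zero hI.isPreconnected p.continuousOn hroot
    obtain ⟨r, hrI, hr⟩ := hroot
    obtain ⟨q, rfl⟩ := dvd_iff_isRoot.mpr hr
    have hq : q ≠ 0 := right_ne_zero_of_mul hp
    obtain ⟨S, hS, hsign⟩ := ih q.natDegree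
      (by rw [← hd, natDegree_mul (X_sub_C_ne_zero r) hq, natDegree_X_sub_C]; omega) hq rfl
    have hroots : q.roots.toFinset.filter (· ∈ I) ⊆
        ((X - C r) * q).roots.toFinset.filter (· ∈ I) :=
      Finset.filter_subset_filter _ (Multiset.toFinset_subset.mpr
        (Multiset.subset_of_le (roots.le_of_dvd hp (dvd_mul_left q _))))
    by_cases hrS : r ∈ S
    · have hmul : (X - C r) * q * nodal (S.erase r) id = q * nodal S id := by
        rw [nodal_eq_mul_nodal_erase hrS, id]; ring
      exact ⟨S.erase r, (S.erase_subset r).trans (hS.trans hroots), by rwa [hmul]⟩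
    · have hmul : (X - C r) * q * nodal (insert r S) id = (X - C r) ^ 2 * (q * nodal S id) := by
        rw [nodal_insert_eq_nodal hrS, id]; ring
      refine ⟨insert r S, Finset.insert_subset (by simp [hp, hrI]) (hS.trans hroots), ?_⟩
      simp only [hmul, eval_mul (p := (X - C r) ^ 2), eval_pow]
      exact hsign.imp (fun h x hx => mul_nonneg (sq_nonneg _) (h x hx))
        fun h x hx => mul_nonpos_of_nonneg_of_nonpos (sq_nonneg _) (h x hx)

lemma one_lt_rootMultiplicity_of_isLocalMin {p : ℝ[X]} {x : ℝ} (hp : p ≠ 0) (hx : p.IsRoot x)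
    (hmin : IsLocalMin (fun y => p.eval y) x) : 1 < p.rootMultiplicity x :=
  (one_lt_rootMultiplicity_iff_isRoot hp).mpr ⟨hx, hmin.hasDerivAt_eq_zero (p.hasDerivAt x)⟩

lemma card_mul_le_natDegree_of_le_rootMultiplicity {R : Type*} [CommRing R] [IsDomain R] {p : R[X]}
    {S : Finset R} {k : ℕ} (h : ∀ x ∈ S, k ≤ p.rootMultiplicity x) : S.card * k ≤ p.natDegree :=
  calc S.card * k ≤ ∑ x ∈ S, p.roots.count x :=
        Finset.card_nsmul_le_sum S _ k fun x hx => (h x hx).trans_eq (count_roots p).symm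
    _ ≤ p.roots.card := by
      rw [← Multiset.toFinset_sum_count_eq]
      exact Finset.sum_le_sum_of_ne_zero fun x _ hx => by
        simpa [Multiset.count_eq_zero, and_comm] using hx
    _ ≤ p.natDegree := p.card_roots'

lemma card_roots_filter_eq_of_pairwise_disjoint {R ι : Type*} [CommRing R] [IsDomain R]
    [DecidableEq R] [Fintype ι] {p : R[X]} {I : ι → Set R} {n : ι → ℕ}
    (hI : Pairwise (Function.onFun Disjoint I))
    (hdeg : p.natDegree ≤ ∑ i, n i) (hn : ∀ i, n i ≤ {x ∈ p.roots.toFinset | x ∈ I i}.card) :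
    p.roots.Nodup ∧ (∀ x ∈ p.roots, ∃ i, x ∈ I i) ∧ ∀ i, (p.roots.filter (· ∈ I i)).card = n i := by
  set S : ι → Finset R := fun i => {x ∈ p.roots.toFinset | x ∈ I i}
  have hS : Pairwise (Function.onFun Disjoint S) := fun i j hij =>
    Finset.disjoint_filter.mpr fun x _ hi hj => Set.disjoint_left.mp (hI hij) hi hj
  have hcard : (Finset.univ.biUnion S).card = ∑ i, (S i).card :=
    Finset.card_biUnion fun i _ j _ hij => hS hij
  have hsub : Finset.univ.biUnion S ⊆ p.roots.toFinset :=
    Finset.biUnion_subset.mpr fun i _ => Finset.filter_subset _ _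
  have hle : ∑ i, n i ≤ ∑ i, (S i).card := Finset.sum_le_sum fun i _ => hn i
  have hsub_card := Finset.card_le_card hsub
  have htoFinset := Multiset.toFinset_card_le p.roots
  have hroots := p.card_roots'
  have hnodup : p.roots.Nodup := Multiset.toFinset_card_eq_card_iff_nodup.mp (by omega)
  have hunion : Finset.univ.biUnion S = p.roots.toFinset :=
    Finset.eq_of_subset_of_card_le hsub (by omega)
  refine ⟨hnodup, fun x hx => ?_, fun i => ?_⟩
  · rw [← Multiset.mem_toFinset, ← hunion] at hx
    obtain ⟨i, -, hxi⟩ := Finset.mem_biUnion.mp hx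
    exact ⟨i, (Finset.mem_filter.mp hxi).2⟩
  · have hi : n i = (S i).card :=
      (Finset.sum_eq_sum_iff_of_le fun i _ => hn i).mp (hle.antisymm (by omega)) i
        (Finset.mem_univ i)
    rw [hi, ← Multiset.toFinset_card_of_nodup (hnodup.filter _), Multiset.toFinset_filter]

end RealRoots

section Functional

variable {L : ℝ[X] →ₗ[ℝ] ℝ} {I : Set ℝ} {p : ℝ[X]} {d m : ℕ}

/-- A linear functional on real polynomials is positive on `I` below degree `d` if it is strictly
positive at the nonzero polynomials of degree less than `d` that are nonnegative on `I`. For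
`I = univ` and all `d` these are the positive definite moment functionals. -/
def PositiveOn (L : ℝ[X] →ₗ[ℝ] ℝ) (I : Set ℝ) (d : ℕ) : Prop :=
  ∀ ⦃P : ℝ[X]⦄, P ≠ 0 → P.natDegree < d → (∀ x ∈ I, 0 ≤ P.eval x) → 0 < L P

/-- The polynomial `p` is orthogonal, for the bilinear form `(p, q) ↦ L (p * q)`, to all polynomials
of degree less than `m`. -/
def OrthogonalBelow (L : ℝ[X] →ₗ[ℝ] ℝ) (p : ℝ[X]) (m : ℕ) : Prop :=
  ∀ ⦃q : ℝ[X]⦄, q.natDegree < m → L (p * q) = 0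

lemma PositiveOn.mono_degree (h : PositiveOn L I d) (hm : m ≤ d) : PositiveOn L I m :=
  fun _ hP hdeg => h hP (hdeg.trans_le hm)

lemma orthogonalBelow_of_mul_X_pow (h : ∀ k < m, L (p * X ^ k) = 0) : OrthogonalBelow L p m := by
  intro q hq
  rw [q.as_sum_range' m hq, Finset.mul_sum, map_sum]
  refine Finset.sum_eq_zero fun k hk => ?_
  rw [← C_mul_X_pow_eq_monomial, mul_left_comm, ← smul_eq_C_mul, map_smul,
    h k (Finset.mem_range.mp hk), smul_zero]

/- With fewer sign changes, multiplying `p` by a linear factor for each of them would give a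
polynomial of constant sign on `I` at which `L` vanishes. -/
lemma PositiveOn.le_card_roots (hL : PositiveOn L I d) (hI : I.OrdConnected) (hp : p ≠ 0)
    (hd : p.natDegree + m ≤ d) (horth : OrthogonalBelow L p m) :
    m ≤ {x ∈ p.roots.toFinset | x ∈ I}.card := by
  obtain ⟨S, hS, hsign⟩ := exists_mul_nodal_nonneg_or_nonpos hI hp
  refine le_trans ?_ (Finset.card_le_card hS)
  by_contra! hlt
  have hnodal : (nodal S id : ℝ[X]) ≠ 0 := nodal_monic.ne_zero
  have hP : p * nodal S id ≠ 0 := mul_ne_zero hp hnodal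
  have hdeg : (p * nodal S id).natDegree < d := by
    rw [natDegree_mul hp hnodal, natDegree_nodal]; omega
  have hzero : L (p * nodal S id) = 0 := horth (by rwa [natDegree_nodal])
  rcases hsign with h | h
  · exact (hL hP hdeg h).ne' hzero
  · refine (hL (neg_ne_zero.mpr hP) (by rwa [natDegree_neg]) fun x hx => ?_).ne' (by simp [hzero])
    rw [eval_neg]
    exact neg_nonneg.mpr (h x hx)

section GaussQuadrature

variable (hL : PositiveOn L Set.univ (2 * p.natDegree)) (hp : p ≠ 0)
  (horth : OrthogonalBelow L p p.natDegree)
include hL hp horth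

lemma OrthogonalBelow.card_roots_toFinset : p.roots.toFinset.card = p.natDegree := by
  refine ((Multiset.toFinset_card_le _).trans p.card_roots').antisymm ?_
  simpa using hL.le_card_roots Set.ordConnected_univ hp (two_mul _).ge horth

lemma OrthogonalBelow.splits : p.Splits :=
  splits_iff_card_roots.mpr <| p.card_roots'.antisymm <|
    (horth.card_roots_toFinset hL hp).ge.trans (Multiset.toFinset_card_le _)

lemma OrthogonalBelow.roots_nodup : p.roots.Nodup :=
  Multiset.toFinset_card_eq_card_iff_nodup.mp <|
    (horth.card_roots_toFinset hL hp).trans (horth.splits hL hp).natDegree_eq_card_roots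

lemma OrthogonalBelow.eval_derivative_ne_zero {x : ℝ} (hx : p.IsRoot x) :
    p.derivative.eval x ≠ 0 := fun hx' =>
  ((one_lt_rootMultiplicity_iff_isRoot hp).mpr ⟨hx, hx'⟩).not_ge <| by
    simpa using Multiset.nodup_iff_count_le_one.mp (horth.roots_nodup hL hp) x

lemma OrthogonalBelow.map_eq_zero_of_eval_eq_zero {P : ℝ[X]} (hP : P.natDegree < 2 * p.natDegree)
    (h0 : ∀ x ∈ p.roots.toFinset, P.eval x = 0) : L P = 0 := by
  obtain rfl | hP0 := eq_or_ne P 0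
  · exact map_zero L
  have hroots : p.roots ≤ P.roots := by
    rw [Multiset.le_iff_subset (horth.roots_nodup hL hp)]
    exact fun x hx => (mem_roots hP0).mpr (h0 x (Multiset.mem_toFinset.mpr hx))
  obtain ⟨q, rfl⟩ := (horth.splits hL hp).dvd_of_roots_le_roots hp hroots
  rw [natDegree_mul hp (right_ne_zero_of_mul hP0)] at hP
  exact horth (by omega)

lemma OrthogonalBelow.map_eq_of_eval_eq {P Q : ℝ[X]} (hP : P.natDegree < 2 * p.natDegree)
    (hQ : Q.natDegree < 2 * p.natDegree) (h : ∀ x ∈ p.roots.toFinset, P.eval x = Q.eval x) :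
    L P = L Q := by
  rw [← sub_eq_zero, ← map_sub]
  exact horth.map_eq_zero_of_eval_eq_zero hL hp
    ((natDegree_sub_le P Q).trans_lt (max_lt hP hQ)) fun x hx => by simp [h x hx]

theorem OrthogonalBelow.gauss_quadrature {P : ℝ[X]} (hP : P.natDegree < 2 * p.natDegree) :
    L P = ∑ x ∈ p.roots.toFinset, P.eval x * L (Lagrange.basis p.roots.toFinset id x) := by
  set S := p.roots.toFinset
  have hS : S.card = p.natDegree := horth.card_roots_toFinset hL hp
  have hinj : Set.InjOn id (S : Set ℝ) := Set.injOn_id _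
  have hdeg : (interpolate S id fun x => P.eval x).natDegree ≤ S.card :=
    natDegree_le_of_degree_le (degree_interpolate_lt _ hinj).le
  calc L P = L (interpolate S id fun x => P.eval x) :=
        horth.map_eq_of_eval_eq hL hp hP (by omega) fun x hx =>
          (eval_interpolate_at_node (fun x => P.eval x) hinj hx).symm
    _ = ∑ x ∈ S, P.eval x * L (Lagrange.basis S id x) := by
      simp [interpolate_apply, ← smul_eq_C_mul]

/- The basis polynomial agrees with its square at the nodes. -/
lemma OrthogonalBelow.map_basis_pos {x : ℝ} (hx : x ∈ p.roots.toFinset) :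
    0 < L (Lagrange.basis p.roots.toFinset id x) := by
  set S := p.roots.toFinset
  have hS : S.card = p.natDegree := horth.card_roots_toFinset hL hp
  have hinj : Set.InjOn id (S : Set ℝ) := Set.injOn_id _
  have hpos : 0 < S.card := Finset.card_pos.mpr ⟨x, hx⟩
  set l := Lagrange.basis S id x
  have hl : l ≠ 0 := basis_ne_zero hinj hx
  have hdeg : l.natDegree = S.card - 1 := natDegree_eq_of_degree_eq_some (degree_basis hinj hx)
  have hdeg_sq : (l ^ 2).natDegree < 2 * p.natDegree := by rw [natDegree_pow, hdeg]; omega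
  have hsq : L l = L (l ^ 2) := by
    refine horth.map_eq_of_eval_eq hL hp (by omega) hdeg_sq fun y hy => ?_
    obtain rfl | hxy := eq_or_ne x y
    · simp [l, show eval x (Lagrange.basis S id x) = 1 from eval_basis_self hinj hx]
    · simp [l, show eval y (Lagrange.basis S id x) = 0 from eval_basis_of_ne (v := id) hxy hy]
  rw [hsq]
  exact hL (pow_ne_zero 2 hl) hdeg_sq fun y _ => by simpa using sq_nonneg (l.eval y)

/- Gauss quadrature gives `0 ≤ L P`, and equality would make every node a double root of `P`. -/
theorem OrthogonalBelow.positiveOn (hI : ∀ x, p.IsRoot x → x ∈ interior I) :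
    PositiveOn L I (2 * p.natDegree) := by
  intro P hP hdeg hnonneg
  have hnode : ∀ x ∈ p.roots.toFinset, x ∈ interior I := fun x hx => hI x (by simp_all)
  have hterm : ∀ x ∈ p.roots.toFinset,
      0 ≤ P.eval x * L (Lagrange.basis p.roots.toFinset id x) := fun x hx =>
    mul_nonneg (hnonneg x (interior_subset (hnode x hx))) (horth.map_basis_pos hL hp hx).le
  rw [horth.gauss_quadrature hL hp hdeg]
  refine (Finset.sum_nonneg hterm).lt_of_ne' fun hsum => ?_
  have hroot : ∀ x ∈ p.roots.toFinset, P.eval x = 0 := fun x hx =>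
    (mul_eq_zero.mp ((Finset.sum_eq_zero_iff_of_nonneg hterm).mp hsum x hx)).resolve_right
      (horth.map_basis_pos hL hp hx).ne'
  have hdouble : ∀ x ∈ p.roots.toFinset, 2 ≤ P.rootMultiplicity x := fun x hx =>
    one_lt_rootMultiplicity_of_isLocalMin hP (hroot x hx) <| by
      filter_upwards [mem_interior_iff_mem_nhds.mp (hnode x hx)] with y hy
      exact (hroot x hx).trans_le (hnonneg y hy)
  have hcard := card_mul_le_natDegree_of_le_rootMultiplicity hdouble
  rw [horth.card_roots_toFinset hL hp] at hcard
  omega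

end GaussQuadrature

end Functional

section Hermite

lemma derivative_hermite_succ (n : ℕ) :
    derivative (hermite (n + 1)) = ((n + 1 : ℕ) : ℤ[X]) * hermite n := by
  induction n with
  | zero => simp
  | succ n ih =>
    rw [hermite_succ (n + 1), derivative_sub, ih, derivative_mul, derivative_mul, derivative_X,
      derivative_natCast, ih, hermite_succ n]
    push_cast
    ring

lemma derivative_derivative_hermite (n : ℕ) :
    derivative (derivative (hermite n)) = X * derivative (hermite n) - (n : ℤ[X]) * hermite n := by
  have h := derivative_hermite_succ n
  rw [hermite_succ, derivative_sub, derivative_mul, derivative_X] at h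
  push_cast at h
  linear_combination -h

/-- The probabilists' Hermite polynomial `Polynomial.hermite n` with real coefficients. -/
noncomputable def realHermite (n : ℕ) : ℝ[X] := (hermite n).map (Int.castRingHom ℝ)

lemma realHermite_succ (n : ℕ) :
    realHermite (n + 1) = X * realHermite n - derivative (realHermite n) := by
  simp [realHermite, derivative_map]

lemma realHermite_ne_zero (n : ℕ) : realHermite n ≠ 0 := ((hermite_monic n).map _).ne_zero

lemma natDegree_realHermite (n : ℕ) : (realHermite n).natDegree = n := by
  rw [realHermite, (hermite_monic n).natDegree_map, natDegree_hermite]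

lemma derivative_derivative_realHermite (n : ℕ) :
    derivative (derivative (realHermite n)) =
      X * derivative (realHermite n) - (n : ℝ[X]) * realHermite n := by
  simpa [realHermite, derivative_map] using
    congrArg (Polynomial.map (Int.castRingHom ℝ)) (derivative_derivative_hermite n)

/- At a root `x` of `p = realHermite n`, Hermite's equation gives `p'' x = x * p' x` and
`p''' x = (x ^ 2 - (n - 1)) * p' x`, which the Laguerre inequality compares. -/
lemma sq_le_of_isRoot_realHermite {n : ℕ} (hsplits : (realHermite n).Splits) {x : ℝ}
    (hx : (realHermite n).IsRoot x) (hx' : (realHermite n).derivative.eval x ≠ 0) :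
    x ^ 2 ≤ 4 * (n - 1) := by
  have hode := derivative_derivative_realHermite n
  have h2 : (realHermite n).derivative.derivative.eval x =
      x * (realHermite n).derivative.eval x := by
    simp [hode, hx.eq_zero]
  have h3 : (realHermite n).derivative.derivative.derivative.eval x =
      (x ^ 2 - (n - 1)) * (realHermite n).derivative.eval x := by
    rw [hode]
    simp only [derivative_sub, derivative_mul, derivative_X, derivative_natCast, eval_sub, eval_add,
      eval_mul, eval_one, eval_X, eval_natCast, eval_zero, h2]
    ring
  have hlag := laguerre_inequality_of_isRoot hsplits hx
  rw [h2, h3] at hlag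
  have hpos : 0 < (realHermite n).derivative.eval x ^ 2 := by positivity
  have hmul : x ^ 2 * (realHermite n).derivative.eval x ^ 2 ≤
      4 * (n - 1) * (realHermite n).derivative.eval x ^ 2 := by linear_combination hlag
  exact le_of_mul_le_mul_right hmul hpos

end Hermite

section Gaussian

variable {μ : ℝ} {v : ℝ≥0}

lemma integrable_eval_gaussianReal (P : ℝ[X]) :
    Integrable (fun x => P.eval x) (gaussianReal μ v) := by
  have hpow (k : ℕ) : Integrable (fun x : ℝ => x ^ k) (gaussianReal μ v) :=
    integrable_pow_of_mem_interior_integrableExpSet (X := id)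
      (by simp [integrableExpSet_id_gaussianReal]) k
  simp only [eval_eq_sum_range]
  exact integrable_finsetSum _ fun k _ => (hpow k).const_mul _

lemma integrable_gaussianPDFReal_mul_eval (hv : v ≠ 0) (P : ℝ[X]) :
    Integrable fun x => gaussianPDFReal μ v x * P.eval x := by
  have h := integrable_eval_gaussianReal (μ := μ) (v := v) P
  rw [gaussianReal_of_var_ne_zero μ hv, integrable_withDensity_iff_integrable_smul'
    (measurable_gaussianPDF μ v) (ae_of_all _ fun _ => gaussianPDF_lt_top)] at h
  simpa using h

/-- The moment functional `P ↦ 𝔼[P(Z)]` of a Gaussian variable `Z` of mean `μ` and variance `v`. -/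
noncomputable def gaussianFunctional (μ : ℝ) (v : ℝ≥0) : ℝ[X] →ₗ[ℝ] ℝ where
  toFun P := ∫ x, P.eval x ∂gaussianReal μ v
  map_add' P Q := by
    simp only [eval_add]
    exact integral_add (integrable_eval_gaussianReal P) (integrable_eval_gaussianReal Q)
  map_smul' a P := by
    simp only [eval_smul, smul_eq_mul, RingHom.id_apply]
    exact integral_const_mul _ _

lemma gaussianFunctional_apply (P : ℝ[X]) :
    gaussianFunctional μ v P = ∫ x, P.eval x ∂gaussianReal μ v := rfl

lemma gaussianFunctional_eq_integral (hv : v ≠ 0) (P : ℝ[X]) :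
    gaussianFunctional μ v P = ∫ x, gaussianPDFReal μ v x * P.eval x :=
  integral_gaussianReal_eq_integral_smul hv

lemma positiveOn_gaussianFunctional_univ (hv : v ≠ 0) (d : ℕ) :
    PositiveOn (gaussianFunctional μ v) Set.univ d := by
  intro P hP _ hnonneg
  have := nullSingletonClass_gaussianReal (μ := μ) hv
  have hzeros : gaussianReal μ v (P.rootSet ℝ) = 0 := (P.rootSet_finite ℝ).measure_zero _
  rw [gaussianFunctional_apply, integral_pos_iff_support_of_nonneg
    (fun x => hnonneg x (Set.mem_univ x)) (integrable_eval_gaussianReal P)]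
  have hsupport : Function.support (fun x => P.eval x) = (P.rootSet ℝ)ᶜ := by
    ext x; simp [mem_rootSet, hP]
  rw [hsupport, (prob_compl_eq_one_iff (P.rootSet_finite ℝ).measurableSet).mpr hzeros]
  exact one_pos

lemma gaussianFunctional_comp (P : ℝ[X]) :
    gaussianFunctional 0 1 (P.comp (C √v * X + C μ)) = gaussianFunctional μ v P := by
  have hmap : (gaussianReal 0 1).map (fun x => √v * x + μ) = gaussianReal μ v := by
    have hv : (NNReal.mk (√(v : ℝ) ^ 2) (sq_nonneg _)) = v := NNReal.eq (sq_sqrt v.coe_nonneg)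
    rw [show (fun x => √v * x + μ) = (· + μ) ∘ (√v * ·) from rfl,
      ← Measure.map_map (by fun_prop) (by fun_prop), gaussianReal_map_const_mul,
      gaussianReal_map_add_const, hv, mul_zero, zero_add, mul_one]
  rw [gaussianFunctional_apply, gaussianFunctional_apply, ← hmap,
    integral_map (by fun_prop) P.continuous.aestronglyMeasurable]
  simp

lemma PositiveOn.gaussianFunctional_of_standard {I : Set ℝ} {d : ℕ} (hv : v ≠ 0)
    (h : PositiveOn (gaussianFunctional 0 1) ((fun x => √v * x + μ) ⁻¹' I) d) :
    PositiveOn (gaussianFunctional μ v) I d := by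
  intro P hP hdeg hnonneg
  have hlin : (C √(v : ℝ) * X + C μ).natDegree = 1 := natDegree_linear (by positivity)
  rw [← gaussianFunctional_comp]
  refine h ?_ (by rwa [natDegree_comp, hlin, mul_one]) fun x hx => by simpa using hnonneg _ hx
  rw [Ne, comp_eq_zero_iff]
  rintro (h0 | ⟨-, h0⟩)
  · exact hP h0
  · rw [h0, natDegree_C] at hlin
    exact zero_ne_one hlin

lemma hasDerivAt_gaussianPDFReal (x : ℝ) :
    HasDerivAt (gaussianPDFReal μ v) (-((x - μ) / v) * gaussianPDFReal μ v x) x := by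
  rw [gaussianPDFReal_def]
  have h := ((((hasDerivAt_id x).sub_const μ).pow 2).neg.div_const (2 * v : ℝ)).exp.const_mul
    (√(2 * π * v))⁻¹
  refine h.congr_deriv ?_
  simp only [Pi.neg_apply, Pi.pow_apply, id_eq, Nat.cast_ofNat, Nat.add_one_sub_one, pow_one]
  field_simp

lemma gaussianFunctional_derivative (P : ℝ[X]) :
    v * gaussianFunctional μ v (derivative P) = gaussianFunctional μ v ((X - C μ) * P) := by
  obtain rfl | hv := eq_or_ne v 0
  · simp [gaussianFunctional_apply]
  have hderiv (x : ℝ) : HasDerivAt (fun x => gaussianPDFReal μ v x * P.eval x)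
      (gaussianPDFReal μ v x * (derivative P - C (v : ℝ)⁻¹ * ((X - C μ) * P)).eval x) x := by
    refine ((hasDerivAt_gaussianPDFReal x).mul (P.hasDerivAt x)).congr_deriv ?_
    simp only [eval_sub, eval_mul, eval_C, eval_X]
    ring
  have hzero := integral_eq_zero_of_hasDerivAt_of_integrable hderiv
    (integrable_gaussianPDFReal_mul_eval hv _) (integrable_gaussianPDFReal_mul_eval hv P)
  rw [← gaussianFunctional_eq_integral hv, map_sub, ← smul_eq_C_mul, map_smul, smul_eq_mul,
    sub_eq_zero] at hzero
  rw [hzero, mul_inv_cancel_left₀ (by exact_mod_cast hv)]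

lemma orthogonalBelow_realHermite (n : ℕ) :
    OrthogonalBelow (gaussianFunctional 0 1) (realHermite n) n := by
  induction n with
  | zero => exact fun q hq => absurd hq (Nat.not_lt_zero _)
  | succ n ih =>
    intro q hq
    have hparts : gaussianFunctional 0 1 (realHermite (n + 1) * q) =
        gaussianFunctional 0 1 (realHermite n * derivative q) := by
      have hstein := gaussianFunctional_derivative (μ := 0) (v := 1) (realHermite n * q)
      rw [NNReal.coe_one, one_mul, C_0, sub_zero, derivative_mul, map_add] at hstein
      rw [realHermite_succ, sub_mul, map_sub, mul_assoc, ← hstein, add_sub_cancel_left]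
    rw [hparts]
    by_cases hq0 : q.natDegree = 0
    · rw [derivative_of_natDegree_zero hq0, mul_zero, map_zero]
    · exact ih ((natDegree_derivative_lt hq0).trans_le (Nat.lt_succ_iff.mp hq))

lemma positiveOn_gaussianFunctional_standard {I : Set ℝ} {N : ℕ}
    (hI : ∀ x : ℝ, x ^ 2 ≤ 4 * (N - 1) → x ∈ interior I) :
    PositiveOn (gaussianFunctional 0 1) I (2 * N) := by
  have hdeg := natDegree_realHermite N
  have horth : OrthogonalBelow (gaussianFunctional 0 1) (realHermite N)
      (realHermite N).natDegree := by
    rw [hdeg]; exact orthogonalBelow_realHermite N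
  have hpos :=
    positiveOn_gaussianFunctional_univ (μ := 0) one_ne_zero (2 * (realHermite N).natDegree)
  have hne := realHermite_ne_zero N
  rw [← hdeg]
  exact horth.positiveOn hpos hne fun x hx => hI x <|
    sq_le_of_isRoot_realHermite (horth.splits hpos hne) hx
      (horth.eval_derivative_ne_zero hpos hne hx)

theorem positiveOn_gaussianFunctional_closedBall {r : ℝ} {d : ℕ} (hv : v ≠ 0) (hr : 0 ≤ r)
    (hd : 2 * v * d ≤ r ^ 2) :
    PositiveOn (gaussianFunctional μ v) (Metric.closedBall μ r) d := by
  obtain ⟨N, hdN, hNd⟩ : ∃ N : ℕ, d ≤ 2 * N ∧ 2 * N ≤ d + 1 := ⟨(d + 1) / 2, by omega, by omega⟩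
  refine (positiveOn_gaussianFunctional_standard fun x hx => ?_).mono_degree hdN
    |>.gaussianFunctional_of_standard hv
  have hNd' : (2 * N : ℝ) ≤ d + 1 := by exact_mod_cast hNd
  have hv0 : (0 : ℝ) < v := by positivity
  have hlt : (√v * x) ^ 2 < r ^ 2 :=
    calc (√(v : ℝ) * x) ^ 2 = (v : ℝ) * x ^ 2 := by rw [mul_pow, sq_sqrt hv0.le]
      _ ≤ (v : ℝ) * (4 * (N - 1)) := by gcongr
      _ < 2 * (v : ℝ) * (2 * N - 1) := by linarith
      _ ≤ 2 * (v : ℝ) * d := by gcongr; linarith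
      _ ≤ r ^ 2 := hd
  refine interior_maximal (Set.preimage_mono Metric.ball_subset_closedBall)
    (Metric.isOpen_ball.preimage (by fun_prop)) ?_
  simpa [Real.dist_eq, abs_of_nonneg hr] using sq_lt_sq.mp hlt

end Gaussian

section MultipleHermite

/-- Monic multiple orthogonality with respect to the weights `exp (-x ^ 2 + c i * x)` and the
multi-index `n`: `H` is the type II multiple Hermite polynomial `H_n`. -/
structure IsMultipleHermite {ι : Type*} [Fintype ι] (c : ι → ℝ) (n : ι → ℕ) (H : ℝ[X]) : Prop where
  monic : H.Monic
  natDegree_eq : H.natDegree = ∑ i, n i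
  integral_eq_zero : ∀ i, ∀ k < n i, ∫ x : ℝ, x ^ k * H.eval x * exp (-x ^ 2 + c i * x) = 0

lemma gaussianFunctional_half_eq_integral (c : ℝ) (P : ℝ[X]) :
    gaussianFunctional (c / 2) (1 / 2) P =
      (√π)⁻¹ * exp (-(c ^ 2 / 4)) * ∫ x : ℝ, P.eval x * exp (-x ^ 2 + c * x) := by
  rw [gaussianFunctional_eq_integral (by simp), ← integral_const_mul]
  congr with x
  have hexp : -(x - c / 2) ^ 2 / (2 * (1 / 2 : ℝ)) = -(c ^ 2 / 4) + (-x ^ 2 + c * x) := by ring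
  rw [gaussianPDFReal, NNReal.coe_div, NNReal.coe_one, NNReal.coe_ofNat, hexp, exp_add]
  ring_nf

variable {ι : Type*} [Fintype ι] {c : ι → ℝ} {n : ι → ℕ} {H : ℝ[X]} {r : ℝ}

namespace IsMultipleHermite

lemma orthogonalBelow (hH : IsMultipleHermite c n H) (i : ι) :
    OrthogonalBelow (gaussianFunctional (c i / 2) (1 / 2)) H (n i) := by
  refine orthogonalBelow_of_mul_X_pow fun k hk => ?_
  rw [gaussianFunctional_half_eq_integral]
  simp only [eval_mul, eval_pow, eval_X, mul_comm (H.eval _), hH.integral_eq_zero i k hk, mul_zero]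

lemma le_card_roots_closedBall (hH : IsMultipleHermite c n H) (hr : 0 ≤ r) {i : ι}
    (hi : (∑ j, n j : ℕ) + n i ≤ r ^ 2) :
    n i ≤ {x ∈ H.roots.toFinset | x ∈ Metric.closedBall (c i / 2) r}.card := by
  have hpos : PositiveOn (gaussianFunctional (c i / 2) (1 / 2)) (Metric.closedBall (c i / 2) r)
      (∑ j, n j + n i) :=
    positiveOn_gaussianFunctional_closedBall (by simp) hr (by simpa using hi)
  exact hpos.le_card_roots (convex_closedBall _ _).ordConnected hH.monic.ne_zero
    (by rw [hH.natDegree_eq]) (hH.orthogonalBelow i)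

theorem card_roots_closedBall_of_pairwise_disjoint (hH : IsMultipleHermite c n H) (hr : 0 ≤ r)
    (hn : ∀ i, (∑ j, n j : ℕ) + n i ≤ r ^ 2)
    (hc : Pairwise (Function.onFun Disjoint fun i => Metric.closedBall (c i / 2) r)) :
    H.roots.Nodup ∧ (∀ x ∈ H.roots, ∃ i, x ∈ Metric.closedBall (c i / 2) r) ∧
      ∀ i, (H.roots.filter (· ∈ Metric.closedBall (c i / 2) r)).card = n i :=
  card_roots_filter_eq_of_pairwise_disjoint hc hH.natDegree_eq.le
    fun i => hH.le_card_roots_closedBall hr (hn i)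

end IsMultipleHermite

end MultipleHermite

/-- For `c > 4√(4n+1)` the zeros of the multiple Hermite polynomial `H_{n,n,n}`
(with parameters `-c, 0, c`) lie in three pairwise disjoint intervals
`I_1, I_2, I_3` around `-c/2, 0, c/2`, with exactly `n` simple zeros in each. -/
theorem multiple_hermite_zeros_three_intervals
    (c : ℝ) (n : ℕ) (hn : 1 ≤ n) (hc : 4 * Real.sqrt (4 * n + 1) < c)
    (H : Polynomial ℝ) (hmonic : H.Monic) (hdeg : H.natDegree = 3 * n)
    (horth1 : ∀ k < n, ∫ x : ℝ, x ^ k * H.eval x * Real.exp (-x ^ 2 + (-c) * x) = 0)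
    (horth2 : ∀ k < n, ∫ x : ℝ, x ^ k * H.eval x * Real.exp (-x ^ 2) = 0)
    (horth3 : ∀ k < n, ∫ x : ℝ, x ^ k * H.eval x * Real.exp (-x ^ 2 + c * x) = 0)
    (I1 I2 I3 : Set ℝ)
    (hI1 : I1 = Set.Icc (-(c / 2) - Real.sqrt (4 * n + 1)) (-(c / 2) + Real.sqrt (4 * n + 1)))
    (hI2 : I2 = Set.Icc (-Real.sqrt (4 * n + 1)) (Real.sqrt (4 * n + 1)))
    (hI3 : I3 = Set.Icc (c / 2 - Real.sqrt (4 * n + 1)) (c / 2 + Real.sqrt (4 * n + 1))) :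
    (Disjoint I1 I2 ∧ Disjoint I1 I3 ∧ Disjoint I2 I3) ∧
    (∀ x : ℝ, H.IsRoot x → x ∈ I1 ∪ I2 ∪ I3) ∧
    H.roots.Nodup ∧
    Multiset.card (H.roots.filter (fun x => x ∈ I1)) = n ∧
    Multiset.card (H.roots.filter (fun x => x ∈ I2)) = n ∧
    Multiset.card (H.roots.filter (fun x => x ∈ I3)) = n := by
  have hI : (fun i => Metric.closedBall ((![-c, 0, c] : Fin 3 → ℝ) i / 2) √(4 * n + 1)) =
      ![I1, I2, I3] := by
    ext i : 1
    fin_cases i <;> simp [Real.closedBall_eq_Icc, hI1, hI2, hI3, neg_div]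
  have hdisj : Disjoint I1 I2 ∧ Disjoint I1 I3 ∧ Disjoint I2 I3 := by
    rw [hI1, hI2, hI3]
    refine ⟨?_, ?_, ?_⟩ <;>
      exact Set.disjoint_left.mpr fun x hx hx' => by
        linarith [hx.2, hx'.1, sqrt_nonneg (4 * n + 1 : ℝ)]
  have hpairwise : Pairwise (Function.onFun Disjoint ![I1, I2, I3]) :=
    (pairwise_disjoint_on _).mpr (by simpa [Fin.forall_fin_succ, and_assoc] using hdisj)
  have hH : IsMultipleHermite ![-c, 0, c] (fun _ => n) H :=
    ⟨hmonic, by simpa using hdeg,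
      Fin.cons horth1 (Fin.cons (by simpa using horth2) (Fin.cons horth3 finZeroElim))⟩
  have hr : ((∑ _ : Fin 3, n : ℕ) : ℝ) + n ≤ √(4 * n + 1) ^ 2 := by
    rw [sq_sqrt (by positivity), Fin.sum_const, smul_eq_mul]
    push_cast
    linarith
  obtain ⟨hnodup, hmem, hcard⟩ :=
    hH.card_roots_closedBall_of_pairwise_disjoint (sqrt_nonneg _) (fun _ => hr) (by rwa [hI])
  simp only [congrFun hI] at hmem hcard
  refine ⟨hdisj, fun x hx => ?_, hnodup, hcard 0, hcard 1, hcard 2⟩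
  simpa [Fin.exists_fin_succ, or_assoc] using hmem x ((mem_roots hmonic.ne_zero).mpr hx)
end

section
/- Fix ĉ > 0. For each n ≥ 1 let H_n be the multiple Hermite polynomial with parameters c_1 = −√n ĉ, c_2 = 0, c_3 = √n ĉ and index (n,n,n), and define S_n(z) = H_n′(√n z)/(√n · H_n(√n z)) for z ∈ ℂ∖ℝ (well defined since all zeros of H_n are real). If (n_k)_k is a strictly increasing sequence of positive integers and S : ℂ∖ℝ → ℂ is analytic with S_{n_k} → S uniformly on every compact subset of ℂ∖ℝ, then for every z ∈ ℂ∖ℝ: S(z)⁴ − 6z S(z)³ + (12z² − ĉ² + 6) S(z)² + (−8z³ + 2ĉ²z − 24z) S(z) + 2(12z² − ĉ²) = 0. -/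
open MeasureTheory Polynomial Real Filter

/-!
Against a Gaussian, the two-sided Laplace transform of a polynomial is again a Gaussian times a
polynomial. Orthogonality of `P` with parameters `c i` and index `(n, …, n)` says that this
polynomial vanishes to order `n` at each `c i`, so by degree it is a multiple of `G ^ n`, where
`G = ∏ (X - c i)`. Transforming `G (G ^ n)' = n G' G ^ n` back, with multiplication by `X`
corresponding to the raising operator `R = v⁻¹ X - d/dx`, gives the differential equation
`v G(R) P' = n G'(R) P`.

Now let `c i = √n a i`, rescale by `√n` and divide by `P`. Where the scaled logarithmic derivatives
converge they are bounded, and since a logarithmic derivative has a pole at every zero, `P` has no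
zeros there; each `d/dx` then becomes multiplication by `S`, up to a term with the factor `1 / n`,
and `R` becomes multiplication by `z / v - S`. With `g = ∏ (X - a i)` the limit of the differential
equation is `v S g(z / v - S) = g'(z / v - S)`.
-/

open Lagrange ProbabilityTheory Topology
open scoped NNReal

namespace MultipleHermite

section GaussianTransform

variable {K : Type*} [Field K] (v : K)

/-- The operator `p ↦ p' + v X p`, i.e. the derivative `d/dt` conjugated by `exp (v t² / 2)`. -/
noncomputable def gaussianDerivative : Module.End K K[X] :=
  derivative + LinearMap.mulLeft K (C v * X)

/-- The polynomial part of the two-sided Laplace transform against the centred Gaussian of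
variance `v`, characterised analytically by `integral_eval_mul_exp_gaussianReal`. It is encoded by
substituting `gaussianDerivative v` for `X`, so that it makes sense over any field. -/
noncomputable def gaussianTransform : K[X] →ₗ[K] K[X] :=
  LinearMap.applyₗ 1 ∘ₗ (aeval (gaussianDerivative v)).toLinearMap

/-- The raising operator `p ↦ v⁻¹ X p - p'` of the Hermite polynomials orthogonal for the centred
Gaussian of variance `v`. -/
noncomputable def hermiteRaising : Module.End K K[X] :=
  LinearMap.mulLeft K (C v⁻¹ * X) - derivative

lemma gaussianDerivative_apply (p : K[X]) :
    gaussianDerivative v p = derivative p + C v * X * p := rfl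

lemma hermiteRaising_apply (p : K[X]) :
    hermiteRaising v p = C v⁻¹ * X * p - derivative p := rfl

lemma gaussianTransform_apply (p : K[X]) :
    gaussianTransform v p = aeval (gaussianDerivative v) p 1 := rfl

lemma gaussianTransform_C (a : K) : gaussianTransform v (C a) = C a := by
  rw [gaussianTransform_apply, aeval_C, Module.algebraMap_end_apply, smul_eq_C_mul, mul_one]

lemma gaussianTransform_X_pow_mul (k : ℕ) (p : K[X]) :
    gaussianTransform v (X ^ k * p) = (gaussianDerivative v ^ k) (gaussianTransform v p) := by
  simp only [gaussianTransform_apply, map_mul, map_pow, aeval_X, Module.End.mul_apply]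

lemma gaussianTransform_X_mul (p : K[X]) :
    gaussianTransform v (X * p) = derivative (gaussianTransform v p)
      + C v * X * gaussianTransform v p := by
  simpa only [pow_one, gaussianDerivative_apply] using gaussianTransform_X_pow_mul v 1 p

lemma derivative_gaussianTransform (p : K[X]) :
    derivative (gaussianTransform v p) = C v * gaussianTransform v (derivative p) := by
  induction p using Polynomial.induction_on with
  | C a => simp only [gaussianTransform_C, derivative_C, map_zero, mul_zero]
  | add p q hp hq => simp only [map_add, hp, hq, mul_add]
  | monomial n a ih =>
    rw [pow_succ', mul_left_comm]
    generalize C a * X ^ n = q at ih ⊢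
    rw [gaussianTransform_X_mul, derivative_mul, derivative_X, one_mul,
      map_add (gaussianTransform v), gaussianTransform_X_mul, ih]
    simp only [derivative_add, derivative_mul, derivative_C, derivative_X, ih]
    ring

variable {v}

lemma gaussianTransform_hermiteRaising (hv : v ≠ 0) (p : K[X]) :
    gaussianTransform v (hermiteRaising v p) = X * gaussianTransform v p := by
  have hCv : C v⁻¹ * C v = (1 : K[X]) := by rw [← C_mul, inv_mul_cancel₀ hv, C_1]
  rw [hermiteRaising_apply, mul_assoc, ← smul_eq_C_mul, map_sub, map_smul, gaussianTransform_X_mul,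
    derivative_gaussianTransform, smul_eq_C_mul]
  linear_combination (gaussianTransform v (derivative p) + X * gaussianTransform v p) * hCv

lemma gaussianTransform_aeval_hermiteRaising (hv : v ≠ 0) (q p : K[X]) :
    gaussianTransform v (aeval (hermiteRaising v) q p) = q * gaussianTransform v p := by
  induction q using Polynomial.induction_on' generalizing p with
  | add q₁ q₂ h₁ h₂ => rw [map_add, LinearMap.add_apply, map_add, h₁, h₂, add_mul]
  | monomial n a =>
    rw [aeval_monomial, Module.End.mul_apply, Module.algebraMap_end_apply, map_smul, smul_eq_C_mul,
      ← C_mul_X_pow_eq_monomial, mul_assoc]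
    congr 1
    induction n with
    | zero => simp only [pow_zero, Module.End.one_apply, one_mul]
    | succ n ih =>
      rw [pow_succ', Module.End.mul_apply, gaussianTransform_hermiteRaising hv, ih, pow_succ',
        mul_assoc]

lemma gaussianTransform_injective [CharZero K] (hv : v ≠ 0) :
    Function.Injective (gaussianTransform v) := by
  refine (injective_iff_map_eq_zero _).2 fun p hp ↦ ?_
  induction hd : p.natDegree using Nat.strong_induction_on generalizing p with
  | _ d ih =>
    have hconst : p.natDegree = 0 := by
      by_contra hpos
      refine hpos (derivative_eq_zero.1 (ih _ (hd ▸ natDegree_derivative_lt hpos) _ ?_ rfl))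
      simpa [hp, hv] using derivative_gaussianTransform v p
    rw [eq_C_of_natDegree_eq_zero hconst] at hp ⊢
    rwa [gaussianTransform_C] at hp

variable (v) in
lemma natDegree_gaussianTransform_le (p : K[X]) :
    (gaussianTransform v p).natDegree ≤ p.natDegree := by
  have natDegree_pow_le (k : ℕ) : ((gaussianDerivative v ^ k) 1).natDegree ≤ k := by
    induction k with
    | zero => simp
    | succ k ih =>
      rw [pow_succ', Module.End.mul_apply, gaussianDerivative_apply, mul_assoc]
      refine natDegree_add_le_of_degree_le ((natDegree_derivative_le _).trans (by lia)) ?_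
      refine (natDegree_C_mul_le _ _).trans (natDegree_mul_le.trans ?_)
      rw [natDegree_X]
      lia
  rw [gaussianTransform_apply, aeval_eq_sum_range, LinearMap.sum_apply]
  refine natDegree_sum_le_of_forall_le _ _ fun i hi ↦ (natDegree_smul_le _ _).trans ?_
  exact (natDegree_pow_le i).trans (Finset.mem_range_succ_iff.1 hi)

lemma X_sub_C_pow_succ_dvd_of_dvd_derivative [CharZero K] {p : K[X]} {c : K} {n : ℕ}
    (hroot : p.IsRoot c) (hdvd : (X - C c) ^ n ∣ derivative p) : (X - C c) ^ (n + 1) ∣ p := by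
  rcases eq_or_ne p 0 with rfl | hp
  · exact dvd_zero _
  have hp' : derivative p ≠ 0 := fun h ↦ by
    rw [eq_C_of_natDegree_eq_zero (derivative_eq_zero.1 h)] at hroot hp
    exact hp (by rw [IsRoot.def, eval_C] at hroot; rw [hroot, C_0])
  rw [← le_rootMultiplicity_iff hp', derivative_rootMultiplicity_of_root hroot] at hdvd
  have := (rootMultiplicity_pos hp).2 hroot
  rw [← le_rootMultiplicity_iff hp]
  lia

lemma X_sub_C_pow_dvd_of_gaussianDerivative_pow_isRoot [CharZero K] {p : K[X]} {c : K} {n : ℕ}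
    (h : ∀ k < n, ((gaussianDerivative v ^ k) p).IsRoot c) : (X - C c) ^ n ∣ p := by
  induction n generalizing p with
  | zero => simp
  | succ n ih =>
    have hp : (X - C c) ^ n ∣ p := ih fun k hk ↦ h k (by lia)
    have hDp : (X - C c) ^ n ∣ gaussianDerivative v p := ih fun k hk ↦ by
      simpa only [pow_succ, Module.End.mul_apply] using h (k + 1) (by lia)
    refine X_sub_C_pow_succ_dvd_of_dvd_derivative (by simpa using h 0 n.succ_pos) ?_
    exact (dvd_add_left (hp.mul_left _)).1 (gaussianDerivative_apply v p ▸ hDp)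

end GaussianTransform

section Orthogonality

lemma hasDerivAt_exp_mul_eval (v : ℝ) (p : ℝ[X]) (t : ℝ) :
    HasDerivAt (fun t ↦ rexp (v * t ^ 2 / 2) * p.eval t)
      (rexp (v * t ^ 2 / 2) * (gaussianDerivative v p).eval t) t := by
  have hexp : HasDerivAt (fun t ↦ rexp (v * t ^ 2 / 2)) (rexp (v * t ^ 2 / 2) * (v * t)) t := by
    convert! (((hasDerivAt_pow 2 t).const_mul v).div_const 2).exp using 2
    ring
  convert! hexp.mul (p.hasDerivAt t) using 1
  simp only [gaussianDerivative_apply, eval_add, eval_mul, eval_C, eval_X]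
  ring

lemma iteratedDeriv_mgf_gaussianReal (v : ℝ≥0) (k : ℕ) :
    iteratedDeriv k (mgf id (gaussianReal 0 v)) =
      fun t ↦ rexp (v * t ^ 2 / 2) * ((gaussianDerivative (v : ℝ) ^ k) 1).eval t := by
  induction k with
  | zero => simp [mgf_id_gaussianReal]
  | succ k ih =>
    ext t
    rw [iteratedDeriv_succ, ih, (hasDerivAt_exp_mul_eval _ _ t).deriv,
      pow_succ' (gaussianDerivative _), Module.End.mul_apply]

lemma mem_interior_integrableExpSet_gaussianReal (v : ℝ≥0) (t : ℝ) :
    t ∈ interior (integrableExpSet id (gaussianReal 0 v)) := by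
  simp [integrableExpSet_id_gaussianReal]

lemma integrable_eval_mul_exp_gaussianReal (v : ℝ≥0) (P : ℝ[X]) (t : ℝ) :
    Integrable (fun x ↦ P.eval x * rexp (t * x)) (gaussianReal 0 v) := by
  induction P using Polynomial.induction_on' with
  | add p q hp hq => simpa only [eval_add, add_mul] using hp.fun_add hq
  | monomial k a =>
    simpa only [eval_monomial, mul_assoc, id] using
      (integrable_pow_mul_exp_of_mem_interior_integrableExpSet
        (mem_interior_integrableExpSet_gaussianReal v t) k).const_mul a

lemma integral_eval_mul_exp_gaussianReal (v : ℝ≥0) (P : ℝ[X]) (t : ℝ) :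
    ∫ x, P.eval x * rexp (t * x) ∂gaussianReal 0 v =
      rexp (v * t ^ 2 / 2) * (gaussianTransform (v : ℝ) P).eval t := by
  induction P using Polynomial.induction_on' with
  | add p q hp hq =>
    simp only [eval_add, add_mul, map_add, mul_add, ← hp, ← hq]
    exact integral_add (integrable_eval_mul_exp_gaussianReal v p t)
      (integrable_eval_mul_exp_gaussianReal v q t)
  | monomial k a =>
    have hmoment := iteratedDeriv_mgf (mem_interior_integrableExpSet_gaussianReal v t) k
    rw [iteratedDeriv_mgf_gaussianReal] at hmoment
    simp only [eval_monomial, mul_assoc, integral_const_mul]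
    rw [gaussianTransform_apply, aeval_monomial, Module.End.mul_apply, Module.algebraMap_end_apply,
      eval_smul, smul_eq_mul, mul_left_comm]
    exact congrArg (a * ·) hmoment.symm

lemma integral_mul_exp_gaussianReal {v : ℝ≥0} (hv : v ≠ 0) (f : ℝ → ℝ) (c : ℝ) :
    ∫ x, f x * rexp (c * x) ∂gaussianReal 0 v =
      (√(2 * π * v))⁻¹ * ∫ x, f x * rexp (-x ^ 2 / (2 * v) + c * x) := by
  rw [integral_gaussianReal_eq_integral_smul hv, ← integral_const_mul]
  refine integral_congr_ae (.of_forall fun x ↦ ?_)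
  simp only [gaussianPDFReal_def, sub_zero, smul_eq_mul, Real.exp_add]
  ring

/-- Type II multiple orthogonality of index `(n, …, n)`: `P` is orthogonal to all polynomials of
degree less than `n` for each of the weights `exp (c i * x)`, `i ∈ t`, against the centred Gaussian
measure of variance `v`. The degree of `P` is not prescribed. -/
def IsMultipleOrthogonal {ι : Type*} (v : ℝ≥0) (t : Finset ι) (c : ι → ℝ) (n : ℕ) (P : ℝ[X]) :
    Prop :=
  ∀ i ∈ t, ∀ k < n, ∫ x, x ^ k * P.eval x * rexp (c i * x) ∂gaussianReal 0 v = 0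

lemma X_sub_C_pow_dvd_gaussianTransform {v : ℝ≥0} {P : ℝ[X]} {c : ℝ} {n : ℕ}
    (h : ∀ k < n, ∫ x, x ^ k * P.eval x * rexp (c * x) ∂gaussianReal 0 v = 0) :
    (X - C c) ^ n ∣ gaussianTransform (v : ℝ) P := by
  refine X_sub_C_pow_dvd_of_gaussianDerivative_pow_isRoot (v := (v : ℝ)) fun k hk ↦ ?_
  have hmoment := integral_eval_mul_exp_gaussianReal v (X ^ k * P) c
  simp only [eval_mul, eval_pow, eval_X, h k hk, gaussianTransform_X_pow_mul] at hmoment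
  exact (mul_eq_zero.1 hmoment.symm).resolve_left (exp_ne_zero _)

variable {ι : Type*} {v : ℝ≥0} {t : Finset ι} {c : ι → ℝ} {n : ℕ} {P : ℝ[X]}

lemma isMultipleOrthogonal_iff (hv : v ≠ 0) :
    IsMultipleOrthogonal v t c n P ↔
      ∀ i ∈ t, ∀ k < n, ∫ x, x ^ k * P.eval x * rexp (-x ^ 2 / (2 * v) + c i * x) = 0 := by
  have hπ : (√(2 * π * v))⁻¹ ≠ 0 := by positivity
  simp only [IsMultipleOrthogonal, integral_mul_exp_gaussianReal hv, mul_eq_zero, hπ, false_or]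

lemma IsMultipleOrthogonal.gaussianTransform_eq (h : IsMultipleOrthogonal v t c n P)
    (hc : Set.InjOn c t) (hdeg : P.natDegree ≤ t.card * n) :
    ∃ b : ℝ, gaussianTransform (v : ℝ) P = C b * nodal t c ^ n := by
  have hdvd : nodal t c ^ n ∣ gaussianTransform (v : ℝ) P := by
    rw [nodal_eq, ← Finset.prod_pow]
    refine Finset.prod_dvd_of_coprime (fun i hi j hj hij ↦ ?_)
      fun i hi ↦ X_sub_C_pow_dvd_gaussianTransform (h i hi)
    exact (isCoprime_X_sub_C_of_isUnit_sub (sub_ne_zero.2 (hc.ne hi hj hij)).isUnit).pow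
  refine ⟨_, eq_leadingCoeff_mul_of_monic_of_dvd_of_natDegree_le (nodal_monic.pow n) hdvd ?_⟩
  rw [nodal_monic.natDegree_pow, natDegree_nodal, mul_comm]
  exact (natDegree_gaussianTransform_le _ _).trans hdeg

/-- The transform turns `P` into a multiple of `nodal t c ^ n`, whose logarithmic derivative is
`n` times that of `nodal t c`; the equation below is this identity transformed back. -/
lemma IsMultipleOrthogonal.differential_equation (h : IsMultipleOrthogonal v t c n P)
    (hv : v ≠ 0) (hc : Set.InjOn c t) (hdeg : P.natDegree ≤ t.card * n) :
    (v : ℝ) • aeval (hermiteRaising (v : ℝ)) (nodal t c) (derivative P) =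
      (n : ℝ) • aeval (hermiteRaising (v : ℝ)) (derivative (nodal t c)) P := by
  have hv' : (v : ℝ) ≠ 0 := NNReal.coe_ne_zero.2 hv
  obtain ⟨b, hb⟩ := h.gaussianTransform_eq hc hdeg
  have hlogDeriv : nodal t c * derivative (gaussianTransform (v : ℝ) P) =
      C (n : ℝ) * (derivative (nodal t c) * gaussianTransform (v : ℝ) P) := by
    rw [hb, derivative_C_mul, derivative_pow]
    rcases n with _ | n
    · simp
    · rw [Nat.add_sub_cancel]
      ring
  apply gaussianTransform_injective hv'
  rw [map_smul, map_smul, gaussianTransform_aeval_hermiteRaising hv',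
    gaussianTransform_aeval_hermiteRaising hv', smul_eq_C_mul, smul_eq_C_mul, ← hlogDeriv,
    derivative_gaussianTransform, mul_left_comm]

end Orthogonality

section LogDerivative

lemma tendsto_sub_mul_derivative_div {𝕜 : Type*} [NontriviallyNormedField 𝕜] {Q : 𝕜[X]}
    (hQ : Q ≠ 0) (w : 𝕜) :
    Tendsto (fun z ↦ (z - w) * ((derivative Q).eval z / Q.eval z)) (𝓝[≠] w)
      (𝓝 (Q.rootMultiplicity w)) := by
  obtain ⟨q, hQq, hdvd⟩ := exists_eq_pow_rootMultiplicity_mul_and_not_dvd Q hQ w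
  have hqw : q.eval w ≠ 0 := fun h ↦ hdvd (dvd_iff_isRoot.2 h)
  generalize Q.rootMultiplicity w = m at hQq
  have hlim : Tendsto (fun z ↦ m + (z - w) * ((derivative q).eval z / q.eval z)) (𝓝 w)
      (𝓝 (m + (w - w) * ((derivative q).eval w / q.eval w))) :=
    (((continuous_id.sub continuous_const).tendsto w).mul
      (((derivative q).continuous.tendsto w).div (q.continuous.tendsto w) hqw)).const_add _
  rw [sub_self, zero_mul, add_zero] at hlim
  refine (hlim.mono_left nhdsWithin_le_nhds).congr' ?_
  filter_upwards [self_mem_nhdsWithin,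
    nhdsWithin_le_nhds (q.continuous.continuousAt.eventually_ne hqw)] with z hzw hqz
  have hzw' : z - w ≠ 0 := sub_ne_zero.2 hzw
  rw [hQq, derivative_mul, derivative_X_sub_C_pow]
  simp only [eval_add, eval_mul, eval_pow, eval_sub, eval_X, eval_C]
  rcases m with _ | m
  · simp
  · rw [Nat.add_sub_cancel]
    field

lemma eval_ne_zero_of_isBoundedUnder_derivative_div {𝕜 : Type*} [NontriviallyNormedField 𝕜]
    [CharZero 𝕜] {Q : 𝕜[X]} (hQ : Q ≠ 0) {w : 𝕜}
    (h : IsBoundedUnder (· ≤ ·) (𝓝[≠] w) fun z ↦ ‖(derivative Q).eval z / Q.eval z‖) :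
    Q.eval w ≠ 0 := by
  have hzero : Tendsto (fun z ↦ z - w) (𝓝[≠] w) (𝓝 0) :=
    (tendsto_sub_nhds_zero_iff.2 tendsto_id).mono_left nhdsWithin_le_nhds
  have hmult : (Q.rootMultiplicity w : 𝕜) = 0 :=
    tendsto_nhds_unique (tendsto_sub_mul_derivative_div hQ w) (hzero.zero_mul_isBoundedUnder_le h)
  exact fun hroot ↦ ((rootMultiplicity_pos hQ).2 hroot).ne' (Nat.cast_eq_zero.1 hmult)

/-- The function `z ↦ p (s z) / (s ^ j P (s z))`; for `j = 1` and `p = P'` this is the scaled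
logarithmic derivative of `P`. By the convention `x / 0 = 0`, it takes the value `0` at the
zeros of the denominator. -/
noncomputable def scaledRatio (s : ℝ) (P : ℝ[X]) (j : ℕ) (p : ℝ[X]) (z : ℂ) : ℂ :=
  aeval (s * z) p / (s ^ j * aeval (s * z) P)

section ScaledRatio

variable {s : ℝ} {P : ℝ[X]} {j : ℕ} {z : ℂ}

lemma scaledRatio_sum {ι : Type*} (t : Finset ι) (p : ι → ℝ[X]) :
    scaledRatio s P j (∑ i ∈ t, p i) z = ∑ i ∈ t, scaledRatio s P j (p i) z := by
  simp only [scaledRatio, map_sum, Finset.sum_div]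

lemma scaledRatio_smul (c : ℝ) (p : ℝ[X]) :
    scaledRatio s P j (c • p) z = c * scaledRatio s P j p z := by
  simp only [scaledRatio, map_smul, Complex.real_smul, mul_div_assoc]

lemma scaledRatio_zero_self (hP : aeval (s * z) P ≠ 0) : scaledRatio s P 0 P z = 1 := by
  rw [scaledRatio, pow_zero, one_mul, div_self hP]

lemma sq_mul_scaledRatio_add_two (hs : s ≠ 0) (p : ℝ[X]) :
    (s : ℂ) ^ 2 * scaledRatio s P (j + 2) p z = scaledRatio s P j p z := by
  have hs' : (s : ℂ) ≠ 0 := Complex.ofReal_ne_zero.2 hs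
  rw [scaledRatio, scaledRatio, pow_add]
  field

lemma scaledRatio_aeval_hermiteRaising_X_sub_C (hs : s ≠ 0) (v a : ℝ) (p : ℝ[X]) :
    scaledRatio s P (j + 1) (aeval (hermiteRaising v) (X - C (s * a)) p) z =
      (z / v - a) * scaledRatio s P j p z - scaledRatio s P (j + 1) (derivative p) z := by
  have hs' : (s : ℂ) ≠ 0 := Complex.ofReal_ne_zero.2 hs
  rw [map_sub, aeval_X, aeval_C, LinearMap.sub_apply, Module.algebraMap_end_apply,
    hermiteRaising_apply]
  simp only [scaledRatio, map_sub, map_mul, map_smul, aeval_C, aeval_X, Complex.real_smul,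
    Complex.coe_algebraMap, Complex.ofReal_mul, Complex.ofReal_inv, pow_succ]
  field

lemma hasDerivAt_scaledRatio (hs : s ≠ 0) (p : ℝ[X]) (hP : aeval (s * z) P ≠ 0) :
    HasDerivAt (scaledRatio s P j p) ((s : ℂ) ^ 2 * (scaledRatio s P (j + 1) (derivative p) z -
      scaledRatio s P 1 (derivative P) z * scaledRatio s P j p z)) z := by
  have hs' : (s : ℂ) ≠ 0 := Complex.ofReal_ne_zero.2 hs
  have hscale (q : ℝ[X]) : HasDerivAt (fun w : ℂ ↦ aeval (s * w) q)
      (aeval (s * z) (derivative q) * s) z :=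
    (q.hasDerivAt_aeval (s * z)).comp z (by simpa using (hasDerivAt_id z).const_mul (s : ℂ))
  convert! (hscale p).div ((hscale P).const_mul ((s : ℂ) ^ j))
    (mul_ne_zero (pow_ne_zero j hs') hP) using 1
  simp only [scaledRatio]
  field

lemma aeval_mul_ne_zero_of_isBoundedUnder_scaledRatio (hs : s ≠ 0) (hP : P ≠ 0)
    (h : IsBoundedUnder (· ≤ ·) (𝓝[≠] z) fun w ↦ ‖scaledRatio s P 1 (derivative P) w‖) :
    aeval (s * z) P ≠ 0 := by
  have hs' : (s : ℂ) ≠ 0 := Complex.ofReal_ne_zero.2 hs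
  set Q : ℂ[X] := (P.map (algebraMap ℝ ℂ)).comp (C (s : ℂ) * X) with hQ_def
  have eval_Q (w : ℂ) : Q.eval w = aeval (s * w) P := by simp [hQ_def, aeval_def, eval_map]
  have hQ : Q ≠ 0 := by
    rwa [hQ_def, Ne, comp_C_mul_X_eq_zero_iff (mem_nonZeroDivisors_of_ne_zero hs'),
      Polynomial.map_eq_zero]
  have hratio (w : ℂ) : (derivative Q).eval w / Q.eval w =
      (s : ℂ) ^ 2 * scaledRatio s P 1 (derivative P) w := by
    rw [eval_Q, hQ_def, derivative_comp, derivative_map]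
    simp only [scaledRatio, derivative_C_mul_X, eval_mul, eval_C, eval_comp, eval_map, eval_X,
      ← aeval_def]
    field
  rw [← eval_Q]
  obtain ⟨M, hM⟩ := h
  refine eval_ne_zero_of_isBoundedUnder_derivative_div hQ ⟨‖(s : ℂ) ^ 2‖ * M, ?_⟩
  simp only [eventually_map, hratio, norm_mul] at hM ⊢
  filter_upwards [hM] with w hw
  gcongr

end ScaledRatio

lemma exists_isOpen_eventually_aeval_mul_ne_zero {κ : Type*} {l : Filter κ} {s : κ → ℝ}
    {P : κ → ℝ[X]} {U : Set ℂ} {S : ℂ → ℂ} (hs : ∀ᶠ k in l, s k ≠ 0) (hP : ∀ k, P k ≠ 0)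
    (hU : IsOpen U) (hS : ContinuousOn S U)
    (hlim : TendstoLocallyUniformlyOn (fun k ↦ scaledRatio (s k) (P k) 1 (derivative (P k))) S l U)
    {z : ℂ} (hz : z ∈ U) :
    ∃ V ⊆ U, IsOpen V ∧ z ∈ V ∧ ∀ᶠ k in l, ∀ w ∈ V, aeval (s k * w) (P k) ≠ 0 := by
  obtain ⟨T, hT, hclose⟩ := Metric.tendstoLocallyUniformlyOn_iff.1 hlim 1 one_pos z hz
  rw [hU.nhdsWithin_eq hz] at hT
  have hSz : ∀ᶠ w in 𝓝 z, ‖S w‖ < ‖S z‖ + 1 :=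
    (hS.continuousAt (hU.mem_nhds hz)).norm.eventually_lt_const (lt_add_one _)
  obtain ⟨V, hV, hVopen, hzV⟩ := mem_nhds_iff.1 (inter_mem (inter_mem hT (hU.mem_nhds hz)) hSz)
  refine ⟨V, fun w hw ↦ (hV hw).1.2, hVopen, hzV, ?_⟩
  filter_upwards [hs, hclose] with k hsk hk w hw
  refine aeval_mul_ne_zero_of_isBoundedUnder_scaledRatio hsk (hP k) ⟨‖S z‖ + 1 + 1, ?_⟩
  rw [eventually_map]
  filter_upwards [nhdsWithin_le_nhds (hVopen.mem_nhds hw)] with w' hw'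
  calc ‖scaledRatio (s k) (P k) 1 (derivative (P k)) w'‖
      ≤ ‖S w'‖ + ‖S w' - scaledRatio (s k) (P k) 1 (derivative (P k)) w'‖ := norm_le_insert _ _
    _ ≤ ‖S z‖ + 1 + 1 := by
      rw [← dist_eq_norm]
      exact add_le_add (hV hw').2.le (hk w' (hV hw').1.1).le

lemma tendstoLocallyUniformlyOn_of_eventually_eqOn {α β κ : Type*} [TopologicalSpace α]
    [UniformSpace β] {l : Filter κ} {F : κ → α → β} {f : α → β} {U : Set α}
    (h : ∀ᶠ k in l, Set.EqOn (F k) f U) : TendstoLocallyUniformlyOn F f l U :=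
  TendstoUniformlyOn.tendstoLocallyUniformlyOn fun _ hu ↦
    h.mono fun _ hk _ hz ↦ hk hz ▸ refl_mem_uniformity hu

/-- The data of a locally uniform limit `S` on an open set `U` of the scaled logarithmic derivatives
`(P k)' (s k z) / (s k P k (s k z))`, along scales `s k → ∞` and away from the zeros of `P k`. -/
structure IsScaledLogDerivLimit {κ : Type*} (l : Filter κ) (s : κ → ℝ) (P : κ → ℝ[X]) (U : Set ℂ)
    (S : ℂ → ℂ) : Prop where
  tendsto_scale : Tendsto s l atTop
  isOpen : IsOpen U
  eventually_aeval_mul_ne_zero : ∀ᶠ k in l, ∀ z ∈ U, aeval (s k * z) (P k) ≠ 0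
  tendstoLocallyUniformlyOn :
    TendstoLocallyUniformlyOn (fun k ↦ scaledRatio (s k) (P k) 1 (derivative (P k))) S l U

namespace IsScaledLogDerivLimit

variable {κ : Type*} {l : Filter κ} {s : κ → ℝ} {P : κ → ℝ[X]} {U : Set ℂ} {S : ℂ → ℂ}

lemma eventually_scale_ne_zero (h : IsScaledLogDerivLimit l s P U S) : ∀ᶠ k in l, s k ≠ 0 :=
  h.tendsto_scale.eventually_ne_atTop 0

lemma tendsto_inv_scale_sq (h : IsScaledLogDerivLimit l s P U S) :
    Tendsto (fun k ↦ ((s k : ℂ) ^ 2)⁻¹) l (𝓝 0) := by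
  have hsq := ((tendsto_pow_atTop two_ne_zero).comp h.tendsto_scale).inv_tendsto_atTop
  simpa [Function.comp_def] using (Complex.continuous_ofReal.tendsto 0).comp hsq

lemma eventually_differentiableOn_scaledRatio (h : IsScaledLogDerivLimit l s P U S) (j : ℕ)
    (p : κ → ℝ[X]) :
    ∀ᶠ k in l, DifferentiableOn ℂ (scaledRatio (s k) (P k) j (p k)) U := by
  filter_upwards [h.eventually_scale_ne_zero, h.eventually_aeval_mul_ne_zero] with k hsk hPk z hz
  exact (hasDerivAt_scaledRatio hsk _ (hPk z hz)).differentiableAt.differentiableWithinAt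

variable {p : κ → ℝ[X]} {j : ℕ} {g : ℂ → ℂ}

lemma differentiableOn [l.NeBot] (h : IsScaledLogDerivLimit l s P U S)
    (hp : TendstoLocallyUniformlyOn (fun k ↦ scaledRatio (s k) (P k) j (p k)) g l U) :
    DifferentiableOn ℂ g U :=
  hp.differentiableOn (h.eventually_differentiableOn_scaledRatio j p) h.isOpen

/-- By the quotient rule, the derivative of the ratio itself enters with the factor `(s k)⁻²`, so
that it drops out in the limit. -/
lemma tendstoLocallyUniformlyOn_derivative [l.NeBot] (h : IsScaledLogDerivLimit l s P U S)
    (hp : TendstoLocallyUniformlyOn (fun k ↦ scaledRatio (s k) (P k) j (p k)) g l U) :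
    TendstoLocallyUniformlyOn (fun k ↦ scaledRatio (s k) (P k) (j + 1) (derivative (p k)))
      (fun z ↦ S z * g z) l U := by
  have hg := h.differentiableOn hp
  have hS := h.differentiableOn h.tendstoLocallyUniformlyOn
  have hderiv := hp.deriv (h.eventually_differentiableOn_scaledRatio j p) h.isOpen
  have hinv := (h.tendsto_inv_scale_sq.tendstoUniformlyOn_const U).tendstoLocallyUniformlyOn
  have hlim := (hinv.fun_mul₀ hderiv continuousOn_const (hg.deriv h.isOpen).continuousOn).fun_add
    (h.tendstoLocallyUniformlyOn.fun_mul₀ hp hS.continuousOn hg.continuousOn)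
  simp only [zero_mul, zero_add] at hlim
  refine hlim.congr_inseparable ?_
  filter_upwards [h.eventually_scale_ne_zero, h.eventually_aeval_mul_ne_zero] with k hsk hPk z hz
  have hsk' : (s k : ℂ) ≠ 0 := Complex.ofReal_ne_zero.2 hsk
  refine .of_eq ?_
  rw [Function.comp_apply, (hasDerivAt_scaledRatio hsk _ (hPk z hz)).deriv,
    inv_mul_cancel_left₀ (pow_ne_zero 2 hsk'), sub_add_cancel]

lemma tendstoLocallyUniformlyOn_hermiteRaising_X_sub_C [l.NeBot]
    (h : IsScaledLogDerivLimit l s P U S) (v a : ℝ)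
    (hp : TendstoLocallyUniformlyOn (fun k ↦ scaledRatio (s k) (P k) j (p k)) g l U) :
    TendstoLocallyUniformlyOn
      (fun k ↦ scaledRatio (s k) (P k) (j + 1) (aeval (hermiteRaising v) (X - C (s k * a)) (p k)))
      (fun z ↦ (z / v - S z - a) * g z) l U := by
  have hlinear : TendstoLocallyUniformlyOn (fun (_ : κ) (z : ℂ) ↦ z / v - a) (fun z ↦ z / v - a)
      l U := tendstoLocallyUniformlyOn_of_eventually_eqOn (.of_forall fun _ _ _ ↦ rfl)
  have hlim := (hlinear.fun_mul₀ hp (by fun_prop) (h.differentiableOn hp).continuousOn).fun_sub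
    (h.tendstoLocallyUniformlyOn_derivative hp)
  refine (hlim.congr_inseparable ?_).congr_right fun z _ ↦ by ring
  filter_upwards [h.eventually_scale_ne_zero] with k hsk z _
  exact .of_eq (scaledRatio_aeval_hermiteRaising_X_sub_C hsk v a (p k)).symm

variable {ι : Type*} (t : Finset ι) (a : ι → ℝ)

lemma tendstoLocallyUniformlyOn_hermiteRaising_nodal [l.NeBot]
    (h : IsScaledLogDerivLimit l s P U S) (v : ℝ)
    (hp : TendstoLocallyUniformlyOn (fun k ↦ scaledRatio (s k) (P k) j (p k)) g l U) :
    TendstoLocallyUniformlyOn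
      (fun k ↦ scaledRatio (s k) (P k) (j + t.card)
        (aeval (hermiteRaising v) (nodal t fun i ↦ s k * a i) (p k)))
      (fun z ↦ aeval (z / v - S z) (nodal t a) * g z) l U := by
  classical
  induction t using Finset.induction_on with
  | empty => simpa using hp
  | insert i t hi ih =>
    simp only [Finset.card_insert_of_notMem hi, nodal_insert_eq_nodal hi,
      map_mul (aeval _), Module.End.mul_apply, ← add_assoc]
    refine (h.tendstoLocallyUniformlyOn_hermiteRaising_X_sub_C v (a i) ih).congr_right
      fun z _ ↦ ?_
    simp only [map_sub, aeval_X, aeval_C, Complex.coe_algebraMap, mul_assoc]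

lemma tendsto_hermiteRaising_derivative_nodal [l.NeBot] (h : IsScaledLogDerivLimit l s P U S)
    (v : ℝ) {z : ℂ} (hz : z ∈ U) :
    Tendsto
      (fun k ↦ (s k : ℂ) ^ 2 * scaledRatio (s k) (P k) (t.card + 1)
        (aeval (hermiteRaising v) (derivative (nodal t fun i ↦ s k * a i)) (P k)) z)
      l (𝓝 (aeval (z / v - S z) (derivative (nodal t a)))) := by
  classical
  have hself : TendstoLocallyUniformlyOn (fun k ↦ scaledRatio (s k) (P k) 0 (P k)) 1 l U :=
    tendstoLocallyUniformlyOn_of_eventually_eqOn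
      (h.eventually_aeval_mul_ne_zero.mono fun k hk z hz ↦ scaledRatio_zero_self (hk z hz))
  have hsum : Tendsto (fun k ↦ ∑ i ∈ t, scaledRatio (s k) (P k) (0 + (t.erase i).card)
      (aeval (hermiteRaising v) (nodal (t.erase i) fun i ↦ s k * a i) (P k)) z) l
      (𝓝 (∑ i ∈ t, aeval (z / v - S z) (nodal (t.erase i) a) * 1)) :=
    tendsto_finsetSum _ fun i _ ↦
      (h.tendstoLocallyUniformlyOn_hermiteRaising_nodal (t.erase i) a v hself).tendsto_at hz
  simp only [derivative_nodal, map_sum, mul_one] at hsum ⊢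
  refine hsum.congr' ?_
  filter_upwards [h.eventually_scale_ne_zero] with k hsk
  rw [LinearMap.sum_apply, scaledRatio_sum, Finset.mul_sum]
  refine Finset.sum_congr rfl fun i hi ↦ ?_
  rw [zero_add, ← Finset.card_erase_add_one hi, sq_mul_scaledRatio_add_two hsk]

lemma mul_aeval_nodal_eq [l.NeBot] {v : ℝ} (h : IsScaledLogDerivLimit l s P U S)
    (hode : ∀ᶠ k in l, v • aeval (hermiteRaising v) (nodal t fun i ↦ s k * a i) (derivative (P k)) =
      s k ^ 2 • aeval (hermiteRaising v) (derivative (nodal t fun i ↦ s k * a i)) (P k))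
    {z : ℂ} (hz : z ∈ U) :
    v * S z * aeval (z / v - S z) (nodal t a) = aeval (z / v - S z) (derivative (nodal t a)) := by
  have hleft := ((h.tendstoLocallyUniformlyOn_hermiteRaising_nodal t a v
    h.tendstoLocallyUniformlyOn).tendsto_at hz).const_mul (v : ℂ)
  have hright := h.tendsto_hermiteRaising_derivative_nodal t a v hz
  rw [mul_assoc, mul_comm (S z)]
  refine tendsto_nhds_unique (hleft.congr' ?_) hright
  filter_upwards [hode] with k hk
  rw [← scaledRatio_smul, hk, scaledRatio_smul, Complex.ofReal_pow, add_comm 1]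

end IsScaledLogDerivLimit

end LogDerivative

lemma nodal_neg_zero_self {R : Type*} [CommRing R] (a : R) :
    nodal Finset.univ ![-a, 0, a] = X ^ 3 - a ^ 2 • X := by
  simp only [nodal_eq, Fin.prod_univ_three, Matrix.cons_val, C_neg, C_0, smul_eq_C_mul, C_pow]
  ring

end MultipleHermite

theorem multiple_hermite_log_derivative_limit_algebraic_equation_general {ι κ : Type*} {v : ℝ≥0}
    (hv : v ≠ 0) {t : Finset ι} {a : ι → ℝ} (ha : Set.InjOn a t) {l : Filter κ} [l.NeBot]
    {n : κ → ℕ} (hn : Tendsto n l atTop) {P : κ → ℝ[X]} (hP : ∀ k, P k ≠ 0)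
    (hdeg : ∀ k, (P k).natDegree ≤ t.card * n k)
    (horth : ∀ k, MultipleHermite.IsMultipleOrthogonal v t (fun i ↦ √(n k) * a i) (n k) (P k))
    {U : Set ℂ} (hU : IsOpen U) {S : ℂ → ℂ} (hS : ContinuousOn S U)
    (hlim : TendstoLocallyUniformlyOn
      (fun k ↦ MultipleHermite.scaledRatio √(n k) (P k) 1 (derivative (P k))) S l U) :
    ∀ z ∈ U, v * S z * aeval (z / v - S z) (nodal t a) =
      aeval (z / v - S z) (derivative (nodal t a)) := by
  intro z hz
  have hscale : Tendsto (fun k ↦ √(n k)) l atTop :=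
    tendsto_sqrt_atTop.comp (tendsto_natCast_atTop_atTop.comp hn)
  obtain ⟨V, hVU, hV, hzV, hne⟩ := MultipleHermite.exists_isOpen_eventually_aeval_mul_ne_zero
    (hscale.eventually_ne_atTop 0) hP hU hS hlim hz
  refine MultipleHermite.IsScaledLogDerivLimit.mul_aeval_nodal_eq t a
    ⟨hscale, hV, hne, hlim.mono hVU⟩ ?_ hzV
  filter_upwards [hscale.eventually_ne_atTop 0] with k hk
  rw [sq_sqrt (n k).cast_nonneg]
  exact (horth k).differential_equation hv
    (fun i hi j hj hij ↦ ha hi hj (mul_left_cancel₀ hk hij)) (hdeg k)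

/-- Any locally uniform limit `S` on `ℂ ∖ ℝ` of the scaled logarithmic derivatives
`S_n(z) = H_n'(√n z)/(√n H_n(√n z))` of the multiple Hermite polynomials with parameters
`-√n ĉ, 0, √n ĉ` satisfies the algebraic equation
`S⁴ - 6zS³ + (12z² - ĉ² + 6)S² + (-8z³ + 2ĉ²z - 24z)S + 2(12z² - ĉ²) = 0`. -/
theorem multiple_hermite_log_derivative_limit_algebraic_equation
    (chat : ℝ) (hchat : 0 < chat)
    (H : ℕ → Polynomial ℝ)
    (hmonic : ∀ n, (H n).Monic) (hdeg : ∀ n, (H n).natDegree = 3 * n)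
    (horth : ∀ n, ∀ k < n,
      (∫ x : ℝ, x ^ k * (H n).eval x *
        Real.exp (-x ^ 2 + (-(Real.sqrt n * chat)) * x) = 0) ∧
      (∫ x : ℝ, x ^ k * (H n).eval x * Real.exp (-x ^ 2) = 0) ∧
      (∫ x : ℝ, x ^ k * (H n).eval x *
        Real.exp (-x ^ 2 + (Real.sqrt n * chat) * x) = 0))
    (S : ℂ → ℂ) (hS : DifferentiableOn ℂ S {z : ℂ | z.im ≠ 0})
    (nk : ℕ → ℕ) (hnk : StrictMono nk) (hnkpos : ∀ k, 0 < nk k)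
    (hconv : ∀ K : Set ℂ, K ⊆ {z : ℂ | z.im ≠ 0} → IsCompact K →
      TendstoUniformlyOn
        (fun (k : ℕ) (z : ℂ) =>
          (Polynomial.aeval ((Real.sqrt (nk k) : ℂ) * z)
              (Polynomial.derivative (H (nk k)))) /
          ((Real.sqrt (nk k) : ℂ) *
            Polynomial.aeval ((Real.sqrt (nk k) : ℂ) * z) (H (nk k))))
        S atTop K) :
    ∀ z : ℂ, z.im ≠ 0 →
      S z ^ 4 - 6 * z * S z ^ 3 + (12 * z ^ 2 - (chat : ℂ) ^ 2 + 6) * S z ^ 2 +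
        (-8 * z ^ 3 + 2 * (chat : ℂ) ^ 2 * z - 24 * z) * S z +
        2 * (12 * z ^ 2 - (chat : ℂ) ^ 2) = 0 := by
  have hhalf : (1 / 2 : ℝ≥0) ≠ 0 := by norm_num
  have hparam : Set.InjOn ![-chat, 0, chat] (Finset.univ : Finset (Fin 3)) :=
    (show StrictMono ![-chat, 0, chat] by simp [hchat]).injective.injOn
  have horth' (k : ℕ) : MultipleHermite.IsMultipleOrthogonal (1 / 2) Finset.univ
      (fun i ↦ √(nk k) * ![-chat, 0, chat] i) (nk k) (H (nk k)) := by
    rw [MultipleHermite.isMultipleOrthogonal_iff hhalf]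
    simpa [Fin.forall_fin_succ, forall_and] using horth (nk k)
  have hopen : IsOpen {z : ℂ | z.im ≠ 0} := isOpen_ne_fun Complex.continuous_im continuous_const
  have hlim := (tendstoLocallyUniformlyOn_iff_forall_isCompact hopen).2 hconv
  intro z hz
  have hlimit : S z / 2 * ((2 * z - S z) ^ 3 - chat ^ 2 * (2 * z - S z)) =
      3 * (2 * z - S z) ^ 2 - chat ^ 2 := by
    simpa [MultipleHermite.nodal_neg_zero_self, div_eq_inv_mul, two_add_one_eq_three] using
      multiple_hermite_log_derivative_limit_algebraic_equation_general hhalf hparam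
        hnk.tendsto_atTop (fun k ↦ (hmonic (nk k)).ne_zero) (fun k ↦ (hdeg (nk k)).le) horth' hopen
        hS.continuousOn (by simpa +unfoldPartialApp [MultipleHermite.scaledRatio] using hlim) z hz
  linear_combination (-2) * hlimit
end

section
/- Let ĉ be a nonzero real number and z ∈ ℂ. The quartic polynomial Q(S) = S⁴ − 6zS³ + (12z² − ĉ² + 6)S² + (−8z³ + 2ĉ²z − 24z)S + 2(12z² − ĉ²) in the variable S has a repeated root in ℂ if and only if 256 ĉ⁶ z⁶ − 128 ĉ⁴ (ĉ⁴ + 18ĉ² − 18) z⁴ + 16 ĉ² (ĉ⁸ + 12ĉ⁶ + 240ĉ⁴ − 1008ĉ² + 432) z² − 32 ĉ² (ĉ² + 4ĉ + 6)² (ĉ² − 4ĉ + 6)² = 0. -/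
open Polynomial

/-! The right-hand side of the theorem is exactly the discriminant of the quartic. Up to sign and
the leading coefficient, the discriminant is the resultant of a polynomial with its derivative, so
it vanishes precisely when the two have a common factor. -/

section Field

variable {K : Type*} [Field K] {f : K[X]}

theorem discr_eq_zero_iff_not_separable (hf : f ≠ 0) : f.discr = 0 ↔ ¬ f.Separable := by
  obtain hdeg | hdeg := f.natDegree.eq_zero_or_pos
  · obtain ⟨r, rfl⟩ := natDegree_eq_zero.1 hdeg
    simpa [separable_C] using hf
  · -- In positive characteristic the derivative may have degree below `f.natDegree - 1`; padding
    -- the Sylvester matrix only multiplies the resultant by a power of the leading coefficient.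
    have resultant_pad : f.resultant (derivative f) f.natDegree (f.natDegree - 1) = 0 ↔
        f.resultant (derivative f) = 0 := by
      obtain ⟨k, hk⟩ := Nat.exists_eq_add_of_le f.natDegree_derivative_le
      rw [hk, resultant_add_right_deg _ _ _ _ k le_rfl]
      simp [hf]
    rw [resultant_deriv (natDegree_pos_iff_degree_pos.1 hdeg), resultant_eq_zero_iff]
      at resultant_pad
    simpa [hf, separable_def] using resultant_pad

theorem exists_X_sub_C_sq_dvd_iff_not_separable (hf : f ≠ 0) (hs : f.Splits) :
    (∃ s, (X - C s) ^ 2 ∣ f) ↔ ¬ f.Separable := by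
  classical
  simp [← nodup_roots_iff_of_splits hf hs, Multiset.nodup_iff_count_le_one,
    ← le_rootMultiplicity_iff hf, Nat.lt_iff_add_one_le]

theorem exists_X_sub_C_sq_dvd_iff_discr_eq_zero (hf : f ≠ 0) (hs : f.Splits) :
    (∃ s, (X - C s) ^ 2 ∣ f) ↔ f.discr = 0 :=
  (exists_X_sub_C_sq_dvd_iff_not_separable hf hs).trans (discr_eq_zero_iff_not_separable hf).symm

end Field

section CommRing

variable {R : Type*} [CommRing R]

theorem sylvesterDeriv_of_natDegree_eq_four {f : R[X]} (hf : f.natDegree = 4) :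
    f.sylvesterDeriv.reindex (finCongr <| by rw [hf]) (finCongr <| by rw [hf]) =
    !![f.coeff 0, 0,         0,         f.coeff 1,     0,             0,             0;
       f.coeff 1, f.coeff 0, 0,         2 * f.coeff 2, f.coeff 1,     0,             0;
       f.coeff 2, f.coeff 1, f.coeff 0, 3 * f.coeff 3, 2 * f.coeff 2, f.coeff 1,     0;
       f.coeff 3, f.coeff 2, f.coeff 1, 4 * f.coeff 4, 3 * f.coeff 3, 2 * f.coeff 2, f.coeff 1;
       f.coeff 4, f.coeff 3, f.coeff 2, 0,             4 * f.coeff 4, 3 * f.coeff 3, 2 * f.coeff 2;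
       0,         f.coeff 4, f.coeff 3, 0,             0,             4 * f.coeff 4, 3 * f.coeff 3;
       0,         0,         1,         0,             0,             0,             4] := by
  have two_eq : (1 + 1 : R) = 2 := by norm_num
  have three_eq : (2 + 1 : R) = 3 := by norm_num
  have four_eq : (3 + 1 : R) = 4 := by norm_num
  ext ⟨i, hi⟩ ⟨j, hj⟩
  simp only [sylvesterDeriv, hf, OfNat.ofNat_ne_zero, ↓reduceDIte, sylvester, Fin.addCases,
    Nat.add_one_sub_one, Fin.val_castLT, Set.mem_Icc, Fin.val_subNat, Fin.val_cast,
    tsub_le_iff_right, coeff_derivative, eq_rec_constant, dite_eq_ite, Nat.reduceMul, Nat.reduceSub,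
    Nat.cast_ofNat, Matrix.reindex_apply, finCongr_symm, Matrix.submatrix_apply, finCongr_apply,
    Fin.cast_mk, Matrix.updateRow_apply, Fin.mk.injEq, Matrix.of_apply]
  interval_cases i <;> interval_cases j <;> simp [two_eq, three_eq, four_eq, mul_comm]

theorem discr_of_natDegree_eq_four {f : R[X]} (hf : f.natDegree = 4) :
    f.discr =
      256 * f.coeff 4 ^ 3 * f.coeff 0 ^ 3
      - 192 * f.coeff 4 ^ 2 * f.coeff 3 * f.coeff 1 * f.coeff 0 ^ 2
      - 128 * f.coeff 4 ^ 2 * f.coeff 2 ^ 2 * f.coeff 0 ^ 2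
      + 144 * f.coeff 4 ^ 2 * f.coeff 2 * f.coeff 1 ^ 2 * f.coeff 0
      - 27 * f.coeff 4 ^ 2 * f.coeff 1 ^ 4
      + 144 * f.coeff 4 * f.coeff 3 ^ 2 * f.coeff 2 * f.coeff 0 ^ 2
      - 6 * f.coeff 4 * f.coeff 3 ^ 2 * f.coeff 1 ^ 2 * f.coeff 0
      - 80 * f.coeff 4 * f.coeff 3 * f.coeff 2 ^ 2 * f.coeff 1 * f.coeff 0
      + 18 * f.coeff 4 * f.coeff 3 * f.coeff 2 * f.coeff 1 ^ 3
      + 16 * f.coeff 4 * f.coeff 2 ^ 4 * f.coeff 0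
      - 4 * f.coeff 4 * f.coeff 2 ^ 3 * f.coeff 1 ^ 2
      - 27 * f.coeff 3 ^ 4 * f.coeff 0 ^ 2
      + 18 * f.coeff 3 ^ 3 * f.coeff 2 * f.coeff 1 * f.coeff 0
      - 4 * f.coeff 3 ^ 3 * f.coeff 1 ^ 3
      - 4 * f.coeff 3 ^ 2 * f.coeff 2 ^ 3 * f.coeff 0
      + f.coeff 3 ^ 2 * f.coeff 2 ^ 2 * f.coeff 1 ^ 2 := by
  rw [discr, ← Matrix.det_reindex_self (finCongr (by rw [hf])),
    sylvesterDeriv_of_natDegree_eq_four hf, hf]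
  simp only [Nat.add_one_sub_one, Nat.reduceAdd, Matrix.det_succ_row_zero, Nat.succ_eq_add_one,
    Fin.isValue, Matrix.of_apply, Matrix.cons_val', Matrix.cons_val_fin_one, Matrix.cons_val_zero,
    Matrix.submatrix_apply, Fin.succ_zero_eq_one, Fin.succAbove, Matrix.cons_val_one,
    Matrix.submatrix_submatrix, Function.comp_apply, Fin.succ_one_eq_two, Matrix.cons_val,
    Fin.reduceSucc, Matrix.det_unique, Fin.default_eq_zero, Fin.castSucc_zero, Fin.sum_univ_succ,
    Fin.coe_ofNat_eq_mod, Nat.zero_mod, pow_zero, one_mul, lt_self_iff_false, ↓reduceIte,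
    Fin.castSucc_one, Finset.univ_unique, Fin.val_succ, Fin.val_eq_zero, zero_add, pow_one,
    Fin.castSucc_succ, neg_mul, Fin.succ_pos, Finset.sum_neg_distrib, Finset.sum_singleton,
    not_lt_zero, Fin.reduceCastSucc, even_two, Even.neg_pow, one_pow, Fin.reduceLT,
    Fin.lt_one_iff, Fin.reduceEq, mul_zero, neg_zero, add_zero, zero_mul, mul_one, mul_neg,
    neg_neg, Matrix.cons_val_succ, Finset.sum_const_zero, Nat.reduceMul, Nat.reduceDiv]
  ring

/-- The quartic satisfied by the limiting Stieltjes transform at `z` of the scaled zero counting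
measures of the multiple Hermite polynomials `H_{n,n,n}`; the scalar `c` is the paper's `ĉ`, so
that the parameters are `-√n c, 0, √n c`. -/
noncomputable def stieltjesQuartic (c z : R) : R[X] :=
  X ^ 4 - C (6 * z) * X ^ 3 + C (12 * z ^ 2 - c ^ 2 + 6) * X ^ 2 +
    C (-8 * z ^ 3 + 2 * c ^ 2 * z - 24 * z) * X + C (2 * (12 * z ^ 2 - c ^ 2))

theorem coeff_stieltjesQuartic (c z : R) (n : ℕ) :
    (stieltjesQuartic c z).coeff n =
      (if n = 4 then 1 else 0) - (if n = 3 then 6 * z else 0)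
        + (if n = 2 then 12 * z ^ 2 - c ^ 2 + 6 else 0)
        + (if n = 1 then -8 * z ^ 3 + 2 * c ^ 2 * z - 24 * z else 0)
        + (if n = 0 then 2 * (12 * z ^ 2 - c ^ 2) else 0) := by
  simp only [stieltjesQuartic, coeff_add, coeff_sub, coeff_X_pow, coeff_C_mul_X_pow,
    coeff_C_mul_X, coeff_C]

theorem natDegree_stieltjesQuartic [Nontrivial R] (c z : R) :
    (stieltjesQuartic c z).natDegree = 4 := by
  unfold stieltjesQuartic
  compute_degree!

theorem stieltjesQuartic_ne_zero [Nontrivial R] (c z : R) : stieltjesQuartic c z ≠ 0 :=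
  ne_zero_of_natDegree_gt (n := 0) (by simp [natDegree_stieltjesQuartic])

theorem discr_stieltjesQuartic (c z : R) :
    (stieltjesQuartic c z).discr =
      256 * c ^ 6 * z ^ 6
        - 128 * c ^ 4 * (c ^ 4 + 18 * c ^ 2 - 18) * z ^ 4
        + 16 * c ^ 2 * (c ^ 8 + 12 * c ^ 6 + 240 * c ^ 4 - 1008 * c ^ 2 + 432) * z ^ 2
        - 32 * c ^ 2 * (c ^ 2 + 4 * c + 6) ^ 2 * (c ^ 2 - 4 * c + 6) ^ 2 := by
  nontriviality R
  rw [discr_of_natDegree_eq_four (natDegree_stieltjesQuartic c z)]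
  simp only [coeff_stieltjesQuartic, ↓reduceIte, Nat.reduceEqDiff, Nat.succ_ne_self,
    OfNat.ofNat_ne_one, OfNat.ofNat_ne_zero, OfNat.zero_ne_ofNat, OfNat.one_ne_ofNat,
    zero_ne_one, one_ne_zero]
  ring

end CommRing

theorem quartic_repeated_root_iff_discriminant_general
    {K : Type*} [Field K] (c z : K) (hs : (stieltjesQuartic c z).Splits) :
    (∃ s, (X - C s) ^ 2 ∣ stieltjesQuartic c z) ↔
      256 * c ^ 6 * z ^ 6
        - 128 * c ^ 4 * (c ^ 4 + 18 * c ^ 2 - 18) * z ^ 4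
        + 16 * c ^ 2 * (c ^ 8 + 12 * c ^ 6 + 240 * c ^ 4 - 1008 * c ^ 2 + 432) * z ^ 2
        - 32 * c ^ 2 * (c ^ 2 + 4 * c + 6) ^ 2 * (c ^ 2 - 4 * c + 6) ^ 2 = 0 := by
  rw [exists_X_sub_C_sq_dvd_iff_discr_eq_zero (stieltjesQuartic_ne_zero c z) hs,
    discr_stieltjesQuartic]

/-- The quartic `S⁴ - 6zS³ + (12z² - ĉ² + 6)S² + (-8z³ + 2ĉ²z - 24z)S + 2(12z² - ĉ²)`
has a repeated root in `ℂ` if and only if the degree six discriminant expression in `z`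
vanishes. -/
theorem quartic_repeated_root_iff_discriminant
    (chat : ℝ) (hchat : chat ≠ 0) (z : ℂ)
    (Q : Polynomial ℂ)
    (hQ : Q = X ^ 4 - C (6 * z) * X ^ 3 + C (12 * z ^ 2 - (chat : ℂ) ^ 2 + 6) * X ^ 2 +
      C (-8 * z ^ 3 + 2 * (chat : ℂ) ^ 2 * z - 24 * z) * X +
      C (2 * (12 * z ^ 2 - (chat : ℂ) ^ 2))) :
    (∃ s : ℂ, (X - C s) ^ 2 ∣ Q) ↔
      256 * (chat : ℂ) ^ 6 * z ^ 6
        - 128 * (chat : ℂ) ^ 4 * ((chat : ℂ) ^ 4 + 18 * (chat : ℂ) ^ 2 - 18) * z ^ 4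
        + 16 * (chat : ℂ) ^ 2 * ((chat : ℂ) ^ 8 + 12 * (chat : ℂ) ^ 6
            + 240 * (chat : ℂ) ^ 4 - 1008 * (chat : ℂ) ^ 2 + 432) * z ^ 2
        - 32 * (chat : ℂ) ^ 2 * ((chat : ℂ) ^ 2 + 4 * (chat : ℂ) + 6) ^ 2 *
            ((chat : ℂ) ^ 2 - 4 * (chat : ℂ) + 6) ^ 2 = 0 := by
  subst hQ
  exact quartic_repeated_root_iff_discriminant_general (chat : ℂ) z (IsAlgClosed.splits _)
end

section
/- Let ĉ > 0 be real and consider the degree-6 polynomial D(z) = 256 ĉ⁶ z⁶ − 128 ĉ⁴ (ĉ⁴ + 18ĉ² − 18) z⁴ + 16 ĉ² (ĉ⁸ + 12ĉ⁶ + 240ĉ⁴ − 1008ĉ² + 432) z² − 32 ĉ² (ĉ² + 4ĉ + 6)² (ĉ² − 4ĉ + 6)² in the variable z. Then D has a repeated root in ℂ if and only if ĉ⁶ − (27/2) ĉ⁴ − 54 ĉ² − 54 = 0. -/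
open Polynomial

/-!
Since `D` is even, `D(z) = Q(z²)` for a cubic `Q` whose coefficients are those of `D`. The chain
rule gives `D'(z) = 2 z Q'(z²)`, so a repeated root of `D` is either `0`, when `Q(0) = 0`, or a
square root of a repeated root of `Q`. The latter exists exactly when the discriminant of `Q`
vanishes, and that discriminant is `2²⁷ c¹² (c² + 2)² (c⁶ - (27/2) c⁴ - 54 c² - 54)³`. For real
`c ≠ 0`, neither `Q(0)` nor the factor `c² + 2` of the discriminant vanishes.
-/

section RepeatedRoots

lemma sq_X_sub_C_dvd_iff_isRoot {R : Type*} [CommRing R] {p : R[X]} {a : R} :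
    (X - C a) ^ 2 ∣ p ↔ p.IsRoot a ∧ (derivative p).IsRoot a := by
  constructor
  · rintro ⟨q, rfl⟩
    simp [derivative_pow]
  · rintro ⟨hroot, hderiv⟩
    obtain ⟨q, rfl⟩ := dvd_iff_isRoot.mpr hroot
    have hq : q.IsRoot a := by simpa using hderiv
    rw [sq]
    exact mul_dvd_mul_left _ (dvd_iff_isRoot.mpr hq)

lemma not_nodup_roots_iff_exists_sq_X_sub_C_dvd {R : Type*} [CommRing R] [IsDomain R] {p : R[X]}
    (hp : p ≠ 0) : ¬p.roots.Nodup ↔ ∃ a, (X - C a) ^ 2 ∣ p := by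
  classical
  simp only [Multiset.nodup_iff_count_le_one, count_roots, not_forall, not_le,
    ← le_rootMultiplicity_iff hp, Nat.succ_le_iff]

lemma exists_sq_X_sub_C_dvd_expand_iff {K : Type*} [Field K] [IsSepClosed K] {n : ℕ}
    [NeZero (n : K)] (hn : 1 < n) {p : K[X]} :
    (∃ a, (X - C a) ^ 2 ∣ expand K n p) ↔ p.IsRoot 0 ∨ ∃ b, (X - C b) ^ 2 ∣ p := by
  have hn₀ : n ≠ 0 := by lia
  have hn₁ : n - 1 ≠ 0 := by lia
  have hnK : (n : K) ≠ 0 := NeZero.ne _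
  simp only [sq_X_sub_C_dvd_iff_isRoot, IsRoot.def, derivative_expand, expand_eval, eval_mul,
    eval_natCast, eval_pow, eval_X, mul_eq_zero, hnK, false_or, pow_eq_zero_iff hn₁]
  constructor
  · rintro ⟨a, hroot, hderiv | rfl⟩
    · exact .inr ⟨a ^ n, hroot, hderiv⟩
    · exact .inl (by rwa [zero_pow hn₀] at hroot)
  · rintro (hroot | ⟨b, hroot, hderiv⟩)
    · exact ⟨0, by rwa [zero_pow hn₀], .inr rfl⟩
    · obtain ⟨a, rfl⟩ := IsSepClosed.exists_pow_nat_eq b n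
      exact ⟨a, hroot, .inl hderiv⟩

lemma exists_sq_X_sub_C_dvd_toPoly_iff_discr_eq_zero {K : Type*} [Field K] [IsAlgClosed K]
    {P : Cubic K} (ha : P.a ≠ 0) : (∃ t, (X - C t) ^ 2 ∣ P.toPoly) ↔ P.discr = 0 := by
  rw [← not_nodup_roots_iff_exists_sq_X_sub_C_dvd (Cubic.ne_zero_of_a_ne_zero ha), not_iff_comm]
  simpa only [Cubic.map_roots, map_id] using
    Cubic.discr_ne_zero_iff_roots_nodup (φ := .id K) ha (IsAlgClosed.splits _)

end RepeatedRoots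

section DiscriminantPolynomial

/-- The polynomial `D(z)` of the theorem, for a parameter `c` in an arbitrary ring: the discriminant
in `S` of `S⁴ - 6zS³ + (12z² - c² + 6)S² + (-8z³ + 2c²z - 24z)S + 2(12z² - c²)`. -/
noncomputable def discriminantPoly {R : Type*} [CommRing R] (c : R) : R[X] :=
  C (256 * c ^ 6) * X ^ 6
    - C (128 * c ^ 4 * (c ^ 4 + 18 * c ^ 2 - 18)) * X ^ 4
    + C (16 * c ^ 2 * (c ^ 8 + 12 * c ^ 6 + 240 * c ^ 4 - 1008 * c ^ 2 + 432)) * X ^ 2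
    - C (32 * c ^ 2 * (c ^ 2 + 4 * c + 6) ^ 2 * (c ^ 2 - 4 * c + 6) ^ 2)

/-- The cubic `Q` with `D(z) = Q(z²)`, where `D = discriminantPoly c`. -/
def discriminantCubic {R : Type*} [CommRing R] (c : R) : Cubic R where
  a := 256 * c ^ 6
  b := -(128 * c ^ 4 * (c ^ 4 + 18 * c ^ 2 - 18))
  c := 16 * c ^ 2 * (c ^ 8 + 12 * c ^ 6 + 240 * c ^ 4 - 1008 * c ^ 2 + 432)
  d := -(32 * c ^ 2 * (c ^ 2 + 4 * c + 6) ^ 2 * (c ^ 2 - 4 * c + 6) ^ 2)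

lemma expand_discriminantCubic {R : Type*} [CommRing R] (c : R) :
    expand R 2 (discriminantCubic c).toPoly = discriminantPoly c := by
  simp only [discriminantCubic, Cubic.toPoly, discriminantPoly, map_add, map_sub, map_neg,
    map_mul, map_pow, expand_C, expand_X]
  ring

variable {K : Type*} [Field K] [NeZero (2 : K)]

lemma discr_discriminantCubic (c : K) :
    (discriminantCubic c).discr =
      2 ^ 27 * c ^ 12 * (c ^ 2 + 2) ^ 2 * (c ^ 6 - 27 / 2 * c ^ 4 - 54 * c ^ 2 - 54) ^ 3 := by
  have h2 : (2 : K) ≠ 0 := NeZero.ne _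
  simp only [discriminantCubic, Cubic.discr]
  field_simp
  ring

lemma discr_discriminantCubic_eq_zero_iff {c : K} (hc : c ≠ 0) :
    (discriminantCubic c).discr = 0 ↔
      c ^ 2 + 2 = 0 ∨ c ^ 6 - 27 / 2 * c ^ 4 - 54 * c ^ 2 - 54 = 0 := by
  simp [discr_discriminantCubic, hc, NeZero.ne (2 : K)]

lemma isRoot_zero_discriminantCubic_iff {c : K} (hc : c ≠ 0) :
    (discriminantCubic c).toPoly.IsRoot 0 ↔ (c ^ 2 + 4 * c + 6) * (c ^ 2 - 4 * c + 6) = 0 := by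
  have h32 : (32 : K) ≠ 0 := (by norm_num : (2 : K) ^ 5 = 32) ▸ pow_ne_zero 5 (NeZero.ne 2)
  simp [discriminantCubic, Cubic.toPoly, hc, h32]

theorem discriminant_polynomial_repeated_root_iff_general [IsAlgClosed K] {c : K} (hc : c ≠ 0) :
    (∃ s : K, (X - C s) ^ 2 ∣ discriminantPoly c) ↔
      (c ^ 2 + 4 * c + 6) * (c ^ 2 - 4 * c + 6) = 0 ∨ c ^ 2 + 2 = 0 ∨
        c ^ 6 - 27 / 2 * c ^ 4 - 54 * c ^ 2 - 54 = 0 := by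
  have : NeZero ((2 : ℕ) : K) := by simpa
  have hlead : (discriminantCubic c).a ≠ 0 := by
    have h256 : (256 : K) ≠ 0 := (by norm_num : (2 : K) ^ 8 = 256) ▸ pow_ne_zero 8 (NeZero.ne 2)
    exact mul_ne_zero h256 (pow_ne_zero 6 hc)
  rw [← expand_discriminantCubic, exists_sq_X_sub_C_dvd_expand_iff one_lt_two,
    exists_sq_X_sub_C_dvd_toPoly_iff_discr_eq_zero hlead, isRoot_zero_discriminantCubic_iff hc,
    discr_discriminantCubic_eq_zero_iff hc]

lemma sq_add_four_mul_add_six_mul_sq_sub_four_mul_add_six_pos {R : Type*} [CommRing R]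
    [LinearOrder R] [IsStrictOrderedRing R] (c : R) :
    0 < (c ^ 2 + 4 * c + 6) * (c ^ 2 - 4 * c + 6) := by
  calc 0 < (c ^ 2 - 2) ^ 2 + 32 := by positivity
    _ = (c ^ 2 + 4 * c + 6) * (c ^ 2 - 4 * c + 6) := by ring

lemma repeated_root_condition_ofReal_iff (x : ℝ) :
    ((x : ℂ) ^ 2 + 4 * x + 6) * ((x : ℂ) ^ 2 - 4 * x + 6) = 0 ∨ (x : ℂ) ^ 2 + 2 = 0 ∨
        (x : ℂ) ^ 6 - 27 / 2 * x ^ 4 - 54 * x ^ 2 - 54 = 0 ↔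
      x ^ 6 - 27 / 2 * x ^ 4 - 54 * x ^ 2 - 54 = 0 := by
  have hconst := (sq_add_four_mul_add_six_mul_sq_sub_four_mul_add_six_pos x).ne'
  have hdiscr : x ^ 2 + 2 ≠ 0 := by positivity
  rw [← Complex.ofReal_ne_zero] at hconst hdiscr
  rw [← Complex.ofReal_eq_zero]
  push_cast at hconst hdiscr ⊢
  exact (or_iff_right hconst).trans (or_iff_right hdiscr)

end DiscriminantPolynomial

/-- The degree six polynomial `D(z)` (the discriminant in `S` of the quartic for the
limiting Stieltjes transform) has a repeated root in `ℂ` if and only if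
`ĉ⁶ - (27/2)ĉ⁴ - 54ĉ² - 54 = 0`. -/
theorem discriminant_polynomial_repeated_root_iff
    (chat : ℝ) (hchat : 0 < chat)
    (D : Polynomial ℂ)
    (hD : D = C (256 * (chat : ℂ) ^ 6) * X ^ 6
      - C (128 * (chat : ℂ) ^ 4 * ((chat : ℂ) ^ 4 + 18 * (chat : ℂ) ^ 2 - 18)) * X ^ 4
      + C (16 * (chat : ℂ) ^ 2 * ((chat : ℂ) ^ 8 + 12 * (chat : ℂ) ^ 6
          + 240 * (chat : ℂ) ^ 4 - 1008 * (chat : ℂ) ^ 2 + 432)) * X ^ 2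
      - C (32 * (chat : ℂ) ^ 2 * ((chat : ℂ) ^ 2 + 4 * (chat : ℂ) + 6) ^ 2 *
          ((chat : ℂ) ^ 2 - 4 * (chat : ℂ) + 6) ^ 2)) :
    (∃ s : ℂ, (X - C s) ^ 2 ∣ D) ↔
      chat ^ 6 - 27 / 2 * chat ^ 4 - 54 * chat ^ 2 - 54 = 0 := by
  subst hD
  exact (discriminant_polynomial_repeated_root_iff_general
    (Complex.ofReal_ne_zero.mpr hchat.ne')).trans (repeated_root_condition_ofReal_iff chat)
end

section
/- The polynomial t⁶ − (27/2)t⁴ − 54t² − 54 has exactly one positive real root c*, and this root satisfies 4.1093 < c* < 4.1094. -/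
/-! The coefficient signs are `+, -, -, -`, so by Descartes' rule of signs there is at most one
positive root. The polynomial changes sign between `4.1093` and `4.1094`, so a root lies there. -/

open Polynomial

section OrderedCommRing

variable {R : Type*} [CommRing R] [LinearOrder R] [IsStrictOrderedRing R]

theorem subsingleton_pos_roots_of_signVariations_le_one {P : R[X]} (hP : P ≠ 0)
    (hsign : P.signVariations ≤ 1) : {x : R | 0 < x ∧ P.IsRoot x}.Subsingleton := by
  rintro x ⟨hx, hPx⟩ y ⟨hy, hPy⟩
  by_contra hxy
  have hle : ({x, y} : Multiset R) ≤ P.roots := by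
    rw [Multiset.le_iff_subset (by simpa using hxy)]
    simp [Multiset.insert_eq_cons, Multiset.cons_subset, hP, hPx.eq_zero, hPy.eq_zero]
  have htwo : 2 ≤ P.roots.countP (0 < ·) := by
    simpa [Multiset.insert_eq_cons, ← Multiset.cons_zero, hx, hy]
      using Multiset.countP_le_of_le (0 < ·) hle
  have hone : P.roots.countP (0 < ·) ≤ 1 := (roots_countP_pos_le_signVariations P).trans hsign
  lia

end OrderedCommRing

/-- The polynomial whose positive root is the critical value `c*` of the parameter `ĉ`, at which
the zeros of the multiple Hermite polynomials `H_{n,n,n}` pass from one interval to three. It is a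
`Polynomial`, not a function, so that its coefficient signs can be read off. -/
noncomputable def criticalPolynomial : ℝ[X] :=
  X ^ 6 - C (27 / 2) * X ^ 4 - C 54 * X ^ 2 - C 54

theorem eval_criticalPolynomial (t : ℝ) :
    criticalPolynomial.eval t = t ^ 6 - 27 / 2 * t ^ 4 - 54 * t ^ 2 - 54 := by
  simp only [criticalPolynomial, eval_sub, eval_mul, eval_pow, eval_X, eval_C]

theorem natDegree_criticalPolynomial : criticalPolynomial.natDegree = 6 := by
  unfold criticalPolynomial
  compute_degree!

theorem criticalPolynomial_ne_zero : criticalPolynomial ≠ 0 :=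
  ne_zero_of_natDegree_gt (n := 0) (by simp [natDegree_criticalPolynomial])

theorem coeffList_criticalPolynomial :
    criticalPolynomial.coeffList = [1, 0, -(27 / 2), 0, -54, 0, -54] := by
  rw [coeffList, withBotSucc_degree_eq_natDegree_add_one criticalPolynomial_ne_zero,
    natDegree_criticalPolynomial]
  simp [criticalPolynomial, List.range_succ, coeff_C, coeff_X_pow]

theorem signVariations_criticalPolynomial : criticalPolynomial.signVariations = 1 := by
  have hsigns : criticalPolynomial.coeffList.map SignType.sign = [1, 0, -1, 0, -1, 0, -1] := by
    simp [coeffList_criticalPolynomial]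
  rw [signVariations, hsigns]
  decide

theorem exists_isRoot_criticalPolynomial_mem_Ioo :
    ∃ c ∈ Set.Ioo 4.1093 4.1094, criticalPolynomial.IsRoot c := by
  have hneg : criticalPolynomial.eval 4.1093 < 0 := by norm_num [eval_criticalPolynomial]
  have hpos : 0 < criticalPolynomial.eval 4.1094 := by norm_num [eval_criticalPolynomial]
  exact intermediate_value_Ioo (by norm_num) criticalPolynomial.continuousOn ⟨hneg, hpos⟩

/-- The polynomial `t⁶ - (27/2)t⁴ - 54t² - 54` has exactly one positive real root `c*`,
and `4.1093 < c* < 4.1094`. -/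
theorem critical_value_unique_positive_root :
    ∃ cstar : ℝ, (0 < cstar ∧
      cstar ^ 6 - 27 / 2 * cstar ^ 4 - 54 * cstar ^ 2 - 54 = 0) ∧
      (4.1093 < cstar ∧ cstar < 4.1094) ∧
      ∀ t : ℝ, 0 < t → t ^ 6 - 27 / 2 * t ^ 4 - 54 * t ^ 2 - 54 = 0 → t = cstar := by
  simp only [← eval_criticalPolynomial]
  obtain ⟨c, ⟨hlo, hhi⟩, hroot⟩ := exists_isRoot_criticalPolynomial_mem_Ioo
  have hpos : 0 < c := lt_trans (by norm_num) hlo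
  exact ⟨c, ⟨hpos, hroot⟩, ⟨hlo, hhi⟩, fun t ht htroot =>
    subsingleton_pos_roots_of_signVariations_le_one criticalPolynomial_ne_zero
      signVariations_criticalPolynomial.le ⟨ht, htroot⟩ ⟨hpos, hroot⟩⟩
end
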